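/- arXiv:1607.04719 — 2 statements merged into one kernel-verified Lean document; each statement's English description precedes it below -/
import Mathlib

section
/- Let n ≥ 1, p > 1, and let u : ℝⁿ → ℝ be a smooth stable solution of (−Δ)³u = |u|^{p−1}u. Then there exists a constant C > 0 such that for every R > 0: (i) ∫_{B_R(0)} |u|^{p+1} + ∫_{B_R(0)} ‖∇(Δu)‖² ≤ C R^{−6} ∫_{B_{2R}(0)} u², and (ii) ∫_{B_R(0)} |u|^{p+1} + ∫_{B_R(0)} ‖∇(Δu)‖² ≤ C R^{n − 6(p+1)/(p−1)}. -/
open MeasureTheory Filter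

noncomputable section

/-- The Euclidean Laplacian of `u` at `x`. -/
def laplacian {n : ℕ} (u : EuclideanSpace ℝ (Fin n) → ℝ) (x : EuclideanSpace ℝ (Fin n)) : ℝ :=
  ∑ i : Fin n, iteratedFDeriv ℝ 2 u x ![EuclideanSpace.single i 1, EuclideanSpace.single i 1]

/-!
Let `η = ψ ^ (k + 3)` for a cutoff `ψ`. Testing the equation with `η ^ 2 * u` and the stability
inequality with `η * u`, and comparing, bounds `A = ∫ |u| ^ (p + 1) * η ^ 2` and
`B = ∫ ‖∇Δu‖ ^ 2 * η ^ 2` by integrals of commutators of `∇Δ` with multiplication by `η`.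
A commutator loses one derivative of `u` and at most three factors of `ψ`, so by interpolation its
contribution is at most `ε * B + K * ∫ ψ ^ (2 * k) * u ^ 2`; absorbing `ε * B` gives
`A + B ≤ C * ∫ ψ ^ (2 * k) * u ^ 2`. If `k` is large, Young's inequality bounds the right-hand side
by `A / 2 + C'`, which gives the second estimate at unit scale. The constants do not depend on `u`,
and `x ↦ R ^ (6 / (p - 1)) * u (x₀ + R • x)` is again a stable solution, so both estimates hold
on every ball.
-/

section SmoothAlgebra

variable {E : Type*} [NormedAddCommGroup E] [NormedSpace ℝ E]

/-- The algebra `C^∞(E)` of smooth real functions, on which directional derivatives act as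
derivations; differential identities in it are then ring identities. -/
def smoothAlgebra (E : Type*) [NormedAddCommGroup E] [NormedSpace ℝ E] :
    Subalgebra ℝ (E → ℝ) where
  carrier := {f | ContDiff ℝ (⊤ : ℕ∞) f}
  mul_mem' hf hg := hf.out.mul hg.out
  add_mem' hf hg := hf.out.add hg.out
  algebraMap_mem' _ := Set.mem_ofPred.2 contDiff_const

instance : CoeFun (smoothAlgebra E) fun _ => E → ℝ := ⟨Subtype.val⟩

theorem smoothAlgebra_contDiff (f : smoothAlgebra E) : ContDiff ℝ (⊤ : ℕ∞) f := f.2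

theorem smoothAlgebra_differentiable (f : smoothAlgebra E) : Differentiable ℝ f :=
  (smoothAlgebra_contDiff f).differentiable (by simp)

theorem smoothAlgebra_contDiff_fderiv (f : smoothAlgebra E) :
    ContDiff ℝ (⊤ : ℕ∞) (fderiv ℝ f) :=
  (smoothAlgebra_contDiff f).fderiv_right (by simp)

/-- The directional derivative along `v`, as a derivation of `C^∞(E)`. -/
def dirDeriv (v : E) : Derivation ℝ (smoothAlgebra E) (smoothAlgebra E) :=
  Derivation.mk'
    { toFun := fun f =>
        ⟨fun x => fderiv ℝ f x v, (smoothAlgebra_contDiff_fderiv f).clm_apply contDiff_const⟩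
      map_add' := fun f g => by
        ext x
        exact congrArg (· v) (fderiv_add (smoothAlgebra_differentiable f x)
          (smoothAlgebra_differentiable g x))
      map_smul' := fun c f => by
        ext x
        exact congrArg (· v) (fderiv_const_smul (smoothAlgebra_differentiable f x) c) }
    fun f g => by
      ext x
      exact congrArg (· v) (fderiv_mul (smoothAlgebra_differentiable f x)
        (smoothAlgebra_differentiable g x))

theorem dirDeriv_apply (v : E) (f : smoothAlgebra E) (x : E) :
    dirDeriv v f x = fderiv ℝ f x v := rfl

theorem dirDeriv_mul (v : E) (f g : smoothAlgebra E) :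
    dirDeriv v (f * g) = f * dirDeriv v g + dirDeriv v f * g := by
  rw [Derivation.leibniz, smul_eq_mul, smul_eq_mul, mul_comm g]

theorem dirDeriv_dirDeriv_apply (v w : E) (f : smoothAlgebra E) (x : E) :
    dirDeriv v (dirDeriv w f) x = fderiv ℝ (fderiv ℝ f) x v w := by
  have hdiff : DifferentiableAt ℝ (fderiv ℝ f) x :=
    (smoothAlgebra_contDiff_fderiv f).differentiable (by simp) x
  change fderiv ℝ (fun y => fderiv ℝ f y w) x v = _
  simp [fderiv_clm_apply hdiff (differentiableAt_const w)]

theorem dirDeriv_comm (v w : E) (f : smoothAlgebra E) :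
    dirDeriv v (dirDeriv w f) = dirDeriv w (dirDeriv v f) := by
  ext x
  rw [dirDeriv_dirDeriv_apply, dirDeriv_dirDeriv_apply]
  refine ((smoothAlgebra_contDiff f).contDiffAt.isSymmSndFDerivAt ?_) v w
  rw [minSmoothness_of_isRCLikeNormedField]
  exact WithTop.coe_le_coe.2 le_top

/-- The ideal of compactly supported functions in `C^∞(E)`. -/
def testFunctions (E : Type*) [NormedAddCommGroup E] [NormedSpace ℝ E] :
    Ideal (smoothAlgebra E) where
  carrier := {f | HasCompactSupport f}
  add_mem' hf hg := HasCompactSupport.add hf hg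
  zero_mem' := HasCompactSupport.zero
  smul_mem' g _ hf := HasCompactSupport.mul_left (f := g) hf

theorem dirDeriv_mem_testFunctions (v : E) {f : smoothAlgebra E}
    (hf : f ∈ testFunctions E) : dirDeriv v f ∈ testFunctions E :=
  HasCompactSupport.fderiv_apply (𝕜 := ℝ) hf v

theorem sq_mem_testFunctions {f : smoothAlgebra E} (hf : f ∈ testFunctions E) :
    f ^ 2 ∈ testFunctions E :=
  Ideal.pow_mem_of_mem _ hf 2 two_pos

theorem mem_testFunctions_of_pow_dvd {ψ g : smoothAlgebra E} (hψ : ψ ∈ testFunctions E)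
    {m : ℕ} (hm : m ≠ 0) (hg : ψ ^ m ∣ g) : g ∈ testFunctions E :=
  Ideal.mem_of_dvd _ hg (Ideal.pow_mem_of_mem _ hψ m (Nat.pos_of_ne_zero hm))

theorem exists_abs_le_mul_pow {ψ g : smoothAlgebra E} (hψ : ψ ∈ testFunctions E) {m : ℕ}
    (hm : m ≠ 0) (hg : ψ ^ m ∣ g) : ∃ K, ∀ x, |g x| ≤ K * |ψ x| ^ m := by
  obtain ⟨h, rfl⟩ := hg
  obtain ⟨K, hK⟩ := IsCompact.exists_bound_of_continuousOn (show IsCompact (tsupport ψ) from hψ)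
    (smoothAlgebra_contDiff h).continuous.continuousOn
  refine ⟨K, fun x => ?_⟩
  rw [show (ψ ^ m * h) x = ψ x ^ m * h x from rfl, abs_mul, abs_pow, mul_comm]
  by_cases hx : x ∈ tsupport ψ
  · gcongr
    exact hK x hx
  · simp [image_eq_zero_of_notMem_tsupport hx, hm]

end SmoothAlgebra

theorem pow_dvd_derivation {R A : Type*} [CommSemiring R] [CommSemiring A] [Algebra R A]
    (D : Derivation R A A) {a b : A} {m : ℕ} (h : a ^ (m + 1) ∣ b) : a ^ m ∣ D b := by
  obtain ⟨c, rfl⟩ := h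
  rw [Derivation.leibniz, Derivation.leibniz_pow, Nat.add_sub_cancel]
  simp only [smul_eq_mul, nsmul_eq_mul]
  refine dvd_add (Dvd.dvd.mul_right (pow_dvd_pow a m.le_succ) _) ?_
  exact Dvd.dvd.mul_left (Dvd.dvd.mul_left (dvd_mul_right _ _) _) c

section TotalIntegral

variable {E : Type*} [NormedAddCommGroup E] [NormedSpace ℝ E] [MeasureSpace E]

/-- The integral over the whole space, used on compactly supported functions, where it is
additive. -/
def totalIntegral (f : smoothAlgebra E) : ℝ := ∫ x, f x

theorem totalIntegral_nonneg {f : smoothAlgebra E} (hf : ∀ x, 0 ≤ f x) : 0 ≤ totalIntegral f :=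
  integral_nonneg hf

/-- The energy of `f` with weight `ψ ^ (2 * m)`: `∫ ψ ^ (2 * m) * f ^ 2`. -/
def weightedEnergy (ψ : smoothAlgebra E) (m : ℕ) (f : smoothAlgebra E) : ℝ :=
  totalIntegral ((ψ ^ m * f) ^ 2)

theorem totalIntegral_sq_nonneg (f : smoothAlgebra E) : 0 ≤ totalIntegral (f ^ 2) :=
  totalIntegral_nonneg fun x => sq_nonneg (f x)

theorem weightedEnergy_nonneg (ψ : smoothAlgebra E) (m : ℕ) (f : smoothAlgebra E) :
    0 ≤ weightedEnergy ψ m f :=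
  totalIntegral_sq_nonneg _

variable [BorelSpace E] [IsFiniteMeasureOnCompacts (volume : Measure E)] {f g : smoothAlgebra E}

theorem integrable_of_mem_testFunctions (hf : f ∈ testFunctions E) : Integrable f :=
  (smoothAlgebra_contDiff f).continuous.integrable_of_hasCompactSupport hf

theorem totalIntegral_add (hf : f ∈ testFunctions E) (hg : g ∈ testFunctions E) :
    totalIntegral (f + g) = totalIntegral f + totalIntegral g :=
  integral_add (integrable_of_mem_testFunctions hf) (integrable_of_mem_testFunctions hg)

theorem totalIntegral_sub (hf : f ∈ testFunctions E) (hg : g ∈ testFunctions E) :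
    totalIntegral (f - g) = totalIntegral f - totalIntegral g :=
  integral_sub (integrable_of_mem_testFunctions hf) (integrable_of_mem_testFunctions hg)

theorem totalIntegral_sum {ι : Type*} (s : Finset ι) {F : ι → smoothAlgebra E}
    (hF : ∀ i ∈ s, F i ∈ testFunctions E) :
    totalIntegral (∑ i ∈ s, F i) = ∑ i ∈ s, totalIntegral (F i) := by
  simp only [totalIntegral, AddSubmonoidClass.coe_finsetSum, Finset.sum_apply]
  exact integral_finsetSum s fun i hi => integrable_of_mem_testFunctions (hF i hi)

theorem totalIntegral_mul_const_le {K : ℝ} (hf : f ∈ testFunctions E) (hg : g ∈ testFunctions E)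
    (h : ∀ x, f x ≤ K * g x) : totalIntegral f ≤ K * totalIntegral g := by
  rw [totalIntegral, totalIntegral, ← integral_const_mul]
  exact integral_mono (integrable_of_mem_testFunctions hf)
    ((integrable_of_mem_testFunctions hg).const_mul K) h

theorem totalIntegral_add_sq_le (hf : f ∈ testFunctions E) (hg : g ∈ testFunctions E) :
    totalIntegral ((f + g) ^ 2) ≤ 2 * (totalIntegral (f ^ 2) + totalIntegral (g ^ 2)) := by
  rw [← totalIntegral_add (sq_mem_testFunctions hf) (sq_mem_testFunctions hg)]
  exact totalIntegral_mul_const_le (sq_mem_testFunctions (add_mem hf hg))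
    (add_mem (sq_mem_testFunctions hf) (sq_mem_testFunctions hg))
    fun x => add_sq_le (a := f x) (b := g x)

theorem abs_totalIntegral_mul_le (hf : f ∈ testFunctions E) (hg : g ∈ testFunctions E) {ε : ℝ}
    (hε : 0 < ε) :
    |totalIntegral (f * g)| ≤ ε * totalIntegral (f ^ 2) + (4 * ε)⁻¹ * totalIntegral (g ^ 2) := by
  have hf2 := (integrable_of_mem_testFunctions (sq_mem_testFunctions hf)).const_mul ε
  have hg2 := (integrable_of_mem_testFunctions (sq_mem_testFunctions hg)).const_mul (4 * ε)⁻¹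
  simp only [totalIntegral]
  rw [← integral_const_mul, ← integral_const_mul, ← integral_add hf2 hg2, ← Real.norm_eq_abs]
  refine norm_integral_le_of_norm_le (hf2.add hg2) (Eventually.of_forall fun x => ?_)
  change |f x * g x| ≤ ε * f x ^ 2 + (4 * ε)⁻¹ * g x ^ 2
  have key : ε * f x ^ 2 + (4 * ε)⁻¹ * g x ^ 2 - |f x * g x| =
      ε * (|f x| - (2 * ε)⁻¹ * |g x|) ^ 2 := by
    rw [abs_mul, ← sq_abs (f x), ← sq_abs (g x)]
    field_simp
    ring
  exact sub_nonneg.1 (key ▸ by positivity)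

variable {ψ : smoothAlgebra E}

theorem exists_totalIntegral_sq_le (hψ : ψ ∈ testFunctions E) {m : ℕ} (hm : m ≠ 0)
    (hg : ψ ^ m ∣ g) :
    ∃ K, 0 ≤ K ∧ ∀ f, totalIntegral ((g * f) ^ 2) ≤ K * weightedEnergy ψ m f := by
  obtain ⟨K, hgK⟩ := exists_abs_le_mul_pow hψ hm hg
  have hmem {h : smoothAlgebra E} (hh : ψ ^ m ∣ h) (f : smoothAlgebra E) :
      (h * f) ^ 2 ∈ testFunctions E :=
    sq_mem_testFunctions (Ideal.mul_mem_right _ _ (mem_testFunctions_of_pow_dvd hψ hm hh))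
  refine ⟨K ^ 2, by positivity, fun f =>
    totalIntegral_mul_const_le (hmem hg f) (hmem dvd_rfl f) fun x : E => ?_⟩
  calc (g x * f x) ^ 2 = |g x| ^ 2 * f x ^ 2 := by rw [sq_abs, mul_pow]
    _ ≤ (K * |ψ x| ^ m) ^ 2 * f x ^ 2 := by gcongr; exact hgK x
    _ = K ^ 2 * (|ψ x ^ m| ^ 2 * f x ^ 2) := by rw [abs_pow]; ring
    _ = K ^ 2 * (ψ x ^ m * f x) ^ 2 := by rw [sq_abs, mul_pow]

theorem exists_abs_totalIntegral_mul_le (hψ : ψ ∈ testFunctions E) {a b : ℕ} (ha : a ≠ 0)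
    (hb : b ≠ 0) (hg : ψ ^ (a + b) ∣ g) {ε : ℝ} (hε : 0 < ε) :
    ∃ K, 0 ≤ K ∧ ∀ f h, |totalIntegral (f * g * h)| ≤
      ε * weightedEnergy ψ a f + K * weightedEnergy ψ b h := by
  obtain ⟨q, rfl⟩ := hg
  obtain ⟨K, hK, hqK⟩ := exists_totalIntegral_sq_le hψ hb (dvd_mul_right (ψ ^ b) q)
  refine ⟨(4 * ε)⁻¹ * K, by positivity, fun f h => ?_⟩
  have hmem {m : ℕ} (hm : m ≠ 0) : ψ ^ m ∈ testFunctions E :=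
    mem_testFunctions_of_pow_dvd hψ hm dvd_rfl
  rw [show f * (ψ ^ (a + b) * q) * h = ψ ^ a * f * (ψ ^ b * q * h) by ring]
  refine (abs_totalIntegral_mul_le (f := ψ ^ a * f) (Ideal.mul_mem_right _ _ (hmem ha))
    (Ideal.mul_mem_right _ _ (Ideal.mul_mem_right _ _ (hmem hb))) hε).trans ?_
  rw [mul_assoc (4 * ε)⁻¹]
  exact add_le_add_right (mul_le_mul_of_nonneg_left (hqK h) (by positivity)) _

end TotalIntegral

theorem totalIntegral_dirDeriv_mul {E : Type*} [NormedAddCommGroup E] [NormedSpace ℝ E]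
    [FiniteDimensional ℝ E] [MeasureSpace E] [BorelSpace E]
    [(volume : Measure E).IsAddHaarMeasure] {g : smoothAlgebra E} (v : E) (f : smoothAlgebra E)
    (hg : g ∈ testFunctions E) :
    totalIntegral (dirDeriv v f * g) = -totalIntegral (f * dirDeriv v g) := by
  have hint {a b : smoothAlgebra E} (hb : b ∈ testFunctions E) : Integrable (a * b) :=
    integrable_of_mem_testFunctions (Ideal.mul_mem_left _ a hb)
  rw [eq_comm, neg_eq_iff_eq_neg, totalIntegral, totalIntegral]
  exact integral_mul_fderiv_eq_neg_fderiv_mul_of_integrable (hint (a := dirDeriv v f) hg)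
    (hint (dirDeriv_mem_testFunctions v hg)) (hint hg)
    (fun x _ => smoothAlgebra_differentiable f x) (fun x _ => smoothAlgebra_differentiable g x)

section RelBoundZero

variable {α : Type*}

/-- `F` is bounded by `B` with relative bound zero, up to a multiple of `T`: the notion of relative
boundedness from perturbation theory, for functionals. -/
def RelBoundZero (F B T : α → ℝ) : Prop :=
  ∀ ε, 0 < ε → ∃ K, 0 ≤ K ∧ ∀ u, F u ≤ ε * B u + K * T u

variable {F G B T : α → ℝ}

theorem RelBoundZero.of_le (hB : ∀ u, 0 ≤ B u) {K : ℝ} (hK : 0 ≤ K) (h : ∀ u, F u ≤ K * T u) :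
    RelBoundZero F B T :=
  fun _ hε => ⟨K, hK, fun u => (h u).trans (le_add_of_nonneg_left (mul_nonneg hε.le (hB u)))⟩

theorem RelBoundZero.add (hF : RelBoundZero F B T) (hG : RelBoundZero G B T) :
    RelBoundZero (fun u => F u + G u) B T := fun ε hε => by
  obtain ⟨K, hK, hFK⟩ := hF (ε / 2) (half_pos hε)
  obtain ⟨L, hL, hGL⟩ := hG (ε / 2) (half_pos hε)
  exact ⟨K + L, add_nonneg hK hL, fun u => by linarith [hFK u, hGL u]⟩

theorem RelBoundZero.sum {ι : Type*} {s : Finset ι} {F B : ι → α → ℝ}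
    (h : ∀ i ∈ s, RelBoundZero (F i) (B i) T) :
    RelBoundZero (fun u => ∑ i ∈ s, F i u) (fun u => ∑ i ∈ s, B i u) T := fun ε hε => by
  choose! K hK hFK using fun i hi => h i hi ε hε
  refine ⟨∑ i ∈ s, K i, Finset.sum_nonneg hK, fun u => ?_⟩
  rw [Finset.mul_sum, Finset.sum_mul, ← Finset.sum_add_distrib]
  exact Finset.sum_le_sum fun i hi => hFK i hi u

theorem RelBoundZero.mono_top {B' : α → ℝ} (h : RelBoundZero F B T) {c : ℝ} (hc : 0 < c)
    (hB : ∀ u, B u ≤ c * B' u) : RelBoundZero F B' T := fun ε hε => by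
  obtain ⟨K, hK, hFK⟩ := h (ε / c) (div_pos hε hc)
  refine ⟨K, hK, fun u => (hFK u).trans ?_⟩
  gcongr ?_ + _
  calc ε / c * B u ≤ ε / c * (c * B' u) := by gcongr; exact hB u
    _ = ε * B' u := by field_simp

theorem RelBoundZero.trans_top (hF : RelBoundZero F G T) (hG : RelBoundZero G B T) :
    RelBoundZero F B T := fun ε hε => by
  obtain ⟨K, hK, hFK⟩ := hF ε hε
  obtain ⟨L, hL, hGL⟩ := hG 1 one_pos
  refine ⟨ε * L + K, by positivity, fun u => (hFK u).trans ?_⟩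
  calc ε * G u + K * T u ≤ ε * (1 * B u + L * T u) + K * T u := by gcongr; exact hGL u
    _ = ε * B u + (ε * L + K) * T u := by ring

theorem RelBoundZero.trans_bot (hB : ∀ u, 0 ≤ B u) (hF : RelBoundZero F B G)
    (hG : RelBoundZero G B T) : RelBoundZero F B T := fun ε hε => by
  obtain ⟨K, hK, hFK⟩ := hF (ε / 2) (half_pos hε)
  obtain ⟨L, hL, hGL⟩ := hG (ε / 2 / (K + 1)) (by positivity)
  refine ⟨K * L, mul_nonneg hK hL, fun u => (hFK u).trans ?_⟩
  have hK1 : K * (ε / 2 / (K + 1)) ≤ ε / 2 := by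
    rw [← mul_div_assoc, div_le_iff₀ (by positivity)]
    nlinarith
  calc ε / 2 * B u + K * G u
      ≤ ε / 2 * B u + K * (ε / 2 / (K + 1) * B u + L * T u) := by gcongr; exact hGL u
    _ = ε / 2 * B u + K * (ε / 2 / (K + 1)) * B u + K * L * T u := by ring
    _ ≤ ε / 2 * B u + ε / 2 * B u + K * L * T u := by gcongr; exact hB u
    _ = ε * B u + K * L * T u := by ring

theorem RelBoundZero.absorb (hG0 : ∀ u, 0 ≤ G u) (hG : RelBoundZero G B F)
    (hF : RelBoundZero F G T) : RelBoundZero G B T := fun ε hε => by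
  obtain ⟨K, hK, hGK⟩ := hG (ε / 2) (half_pos hε)
  obtain ⟨L, hL, hFL⟩ := hF (1 / 2 / (K + 1)) (by positivity)
  refine ⟨2 * (K * L), by positivity, fun u => ?_⟩
  have hK1 : K * (1 / 2 / (K + 1)) ≤ 1 / 2 := by
    rw [← mul_div_assoc, div_le_iff₀ (by positivity)]
    linarith
  have key : G u ≤ ε / 2 * B u + 1 / 2 * G u + K * L * T u :=
    calc G u ≤ ε / 2 * B u + K * F u := hGK u
      _ ≤ ε / 2 * B u + K * (1 / 2 / (K + 1) * G u + L * T u) := by gcongr; exact hFL u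
      _ = ε / 2 * B u + K * (1 / 2 / (K + 1)) * G u + K * L * T u := by ring
      _ ≤ ε / 2 * B u + 1 / 2 * G u + K * L * T u := by gcongr; exact hG0 u
  linarith

end RelBoundZero

section MulCommutator

variable {R : Type*} [CommRing R]

/-- The commutator of the operator `L` with multiplication by `e`, as an operator on `u`. -/
def mulCommutator (L : R → R) (e u : R) : R := L (e * u) - e * L u

theorem mulCommutator_mem {I : Ideal R} {L : R → R} (hL : ∀ v ∈ I, L v ∈ I) {e : R} (he : e ∈ I)
    (u : R) : mulCommutator L e u ∈ I :=
  sub_mem (hL _ (I.mul_mem_right u he)) (I.mul_mem_right _ he)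

theorem mul_apply_mul_mul (L : R → R) (e u : R) :
    L u * L (e * (e * u)) = (e * L u) ^ 2 + 2 * (L u * (e * mulCommutator L e u)) +
      L u * mulCommutator (mulCommutator L e) e u := by
  simp only [mulCommutator]
  ring

theorem apply_mul_sq (L : R → R) (e u : R) :
    L (e * u) ^ 2 = L u * L (e * (e * u)) + mulCommutator L e u ^ 2 -
      L u * mulCommutator (mulCommutator L e) e u := by
  simp only [mulCommutator]
  ring

end MulCommutator

section EuclideanCalculus

variable {n : ℕ}

/-- The algebra `C^∞(ℝⁿ)`. -/
abbrev euclideanSmooth (n : ℕ) : Subalgebra ℝ (EuclideanSpace ℝ (Fin n) → ℝ) :=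
  smoothAlgebra (EuclideanSpace ℝ (Fin n))

/-- The partial derivative `∂ᵢ` as a derivation of `C^∞(ℝⁿ)`. -/
abbrev partialDeriv (i : Fin n) : Derivation ℝ (euclideanSmooth n) (euclideanSmooth n) :=
  dirDeriv (EuclideanSpace.single i 1)

/-- The Laplacian as an operator on `C^∞(ℝⁿ)`. -/
def smoothLaplacian (f : euclideanSmooth n) : euclideanSmooth n :=
  ∑ i, partialDeriv i (partialDeriv i f)

/-- The `l`-th component `∂ₗΔ` of the operator `∇Δ` on `C^∞(ℝⁿ)`. -/
def gradLaplacian (l : Fin n) (f : euclideanSmooth n) : euclideanSmooth n :=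
  partialDeriv l (smoothLaplacian f)

theorem laplacian_eq_smoothLaplacian (f : euclideanSmooth n) :
    laplacian f = smoothLaplacian f := by
  ext x
  simp [laplacian, smoothLaplacian, iteratedFDeriv_two_apply, dirDeriv_dirDeriv_apply]

theorem norm_gradient_sq (f : euclideanSmooth n) (x : EuclideanSpace ℝ (Fin n)) :
    ‖gradient f x‖ ^ 2 = ∑ i, partialDeriv i f x ^ 2 := by
  rw [EuclideanSpace.norm_sq_eq]
  refine Finset.sum_congr rfl fun i _ => ?_
  rw [dirDeriv_apply, ← inner_gradient_left, EuclideanSpace.inner_single_right]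
  simp

theorem norm_gradient_laplacian_sq (f : euclideanSmooth n) (x : EuclideanSpace ℝ (Fin n)) :
    ‖gradient (laplacian f) x‖ ^ 2 = ∑ l, gradLaplacian l f x ^ 2 := by
  rw [laplacian_eq_smoothLaplacian, norm_gradient_sq]
  rfl

theorem gradLaplacian_eq_smoothLaplacian_partialDeriv (l : Fin n) (f : euclideanSmooth n) :
    gradLaplacian l f = smoothLaplacian (partialDeriv l f) := by
  simp only [gradLaplacian, smoothLaplacian, map_sum]
  exact Finset.sum_congr rfl fun i _ => by
    rw [dirDeriv_comm _ _ (partialDeriv i f), dirDeriv_comm _ _ f]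

theorem smoothLaplacian_mul (f g : euclideanSmooth n) :
    smoothLaplacian (f * g) = smoothLaplacian f * g +
      ∑ i, 2 * partialDeriv i f * partialDeriv i g + f * smoothLaplacian g := by
  simp only [smoothLaplacian, Finset.mul_sum, Finset.sum_mul, ← Finset.sum_add_distrib]
  refine Finset.sum_congr rfl fun i _ => ?_
  simp only [dirDeriv_mul, map_add]
  ring

theorem mulCommutator_gradLaplacian (l : Fin n) (e u : euclideanSmooth n) :
    mulCommutator (gradLaplacian l) e u =
      gradLaplacian l e * u + smoothLaplacian e * partialDeriv l u +
      ∑ i, (2 * partialDeriv l (partialDeriv i e) * partialDeriv i u +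
        2 * partialDeriv i e * partialDeriv l (partialDeriv i u)) +
      partialDeriv l e * smoothLaplacian u := by
  have hsum (i : Fin n) : partialDeriv l (2 * partialDeriv i e * partialDeriv i u) =
      2 * partialDeriv l (partialDeriv i e) * partialDeriv i u +
        2 * partialDeriv i e * partialDeriv l (partialDeriv i u) := by
    simp only [two_mul, map_add, dirDeriv_mul]
    ring
  simp only [mulCommutator, gradLaplacian, smoothLaplacian_mul, map_add, map_sum, hsum]
  rw [dirDeriv_mul, dirDeriv_mul]
  ring

theorem mulCommutator_mulCommutator_gradLaplacian (l : Fin n) (e u : euclideanSmooth n) :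
    mulCommutator (mulCommutator (gradLaplacian l) e) e u =
      (2 * partialDeriv l e * smoothLaplacian e +
        ∑ i, 4 * partialDeriv i e * partialDeriv l (partialDeriv i e)) * u +
      (∑ i, 2 * partialDeriv i e ^ 2) * partialDeriv l u +
      ∑ i, 4 * partialDeriv i e * partialDeriv l e * partialDeriv i u := by
  have hsum : ∑ i, (2 * partialDeriv l (partialDeriv i e) * partialDeriv i (e * u) +
        2 * partialDeriv i e * partialDeriv l (partialDeriv i (e * u))) =
      e * ∑ i, (2 * partialDeriv l (partialDeriv i e) * partialDeriv i u +
        2 * partialDeriv i e * partialDeriv l (partialDeriv i u)) +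
      (∑ i, 4 * partialDeriv i e * partialDeriv l (partialDeriv i e)) * u +
      (∑ i, 2 * partialDeriv i e ^ 2) * partialDeriv l u +
      ∑ i, 2 * partialDeriv i e * partialDeriv l e * partialDeriv i u := by
    simp only [Finset.mul_sum, Finset.sum_mul, ← Finset.sum_add_distrib]
    refine Finset.sum_congr rfl fun i _ => ?_
    simp only [dirDeriv_mul, map_add]
    ring
  have hsplit : ∑ i, 4 * partialDeriv i e * partialDeriv l e * partialDeriv i u =
      ∑ i, 2 * partialDeriv i e * partialDeriv l e * partialDeriv i u +
      partialDeriv l e * ∑ i, 2 * partialDeriv i e * partialDeriv i u := by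
    rw [Finset.mul_sum, ← Finset.sum_add_distrib]
    exact Finset.sum_congr rfl fun i _ => by ring
  rw [mulCommutator, mulCommutator_gradLaplacian, mulCommutator_gradLaplacian, hsum, hsplit,
    smoothLaplacian_mul, dirDeriv_mul (EuclideanSpace.single l 1)]
  ring

theorem totalIntegral_smoothLaplacian_mul_eq_neg_sum (f : euclideanSmooth n)
    {g : euclideanSmooth n} (hg : g ∈ testFunctions _) :
    totalIntegral (smoothLaplacian f * g) =
      -∑ i, totalIntegral (partialDeriv i f * partialDeriv i g) := by
  rw [smoothLaplacian, Finset.sum_mul,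
    totalIntegral_sum _ fun i _ => Ideal.mul_mem_left _ _ hg, ← Finset.sum_neg_distrib]
  exact Finset.sum_congr rfl fun i _ => totalIntegral_dirDeriv_mul _ _ hg

theorem totalIntegral_smoothLaplacian_mul_comm (f : euclideanSmooth n)
    {g : euclideanSmooth n} (hg : g ∈ testFunctions _) :
    totalIntegral (smoothLaplacian f * g) = totalIntegral (f * smoothLaplacian g) := by
  have hmem (i : Fin n) := dirDeriv_mem_testFunctions (EuclideanSpace.single i 1) hg
  rw [totalIntegral_smoothLaplacian_mul_eq_neg_sum f hg, smoothLaplacian, Finset.mul_sum,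
    totalIntegral_sum _ fun i _ => Ideal.mul_mem_left _ _ (dirDeriv_mem_testFunctions _ (hmem i)),
    ← Finset.sum_neg_distrib]
  exact Finset.sum_congr rfl fun i _ => by
    rw [totalIntegral_dirDeriv_mul _ _ (hmem i), neg_neg]

theorem totalIntegral_trilaplacian_mul (u : euclideanSmooth n) {g : euclideanSmooth n}
    (hg : g ∈ testFunctions _) :
    totalIntegral (smoothLaplacian (smoothLaplacian (smoothLaplacian u)) * g) =
      -∑ l, totalIntegral (gradLaplacian l u * gradLaplacian l g) := by
  rw [totalIntegral_smoothLaplacian_mul_eq_neg_sum _ hg]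
  refine congrArg Neg.neg (Finset.sum_congr rfl fun l _ => ?_)
  rw [gradLaplacian_eq_smoothLaplacian_partialDeriv l g,
    ← totalIntegral_smoothLaplacian_mul_comm _ (dirDeriv_mem_testFunctions _ hg), gradLaplacian,
    ← gradLaplacian_eq_smoothLaplacian_partialDeriv, gradLaplacian]

end EuclideanCalculus

section Interpolation

variable {n : ℕ} {ψ : euclideanSmooth n}

theorem sum_weightedEnergy_partialDeriv (hψ : ψ ∈ testFunctions _) (m : ℕ)
    (f : euclideanSmooth n) :
    ∑ i, weightedEnergy ψ (m + 1) (partialDeriv i f) =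
      -totalIntegral (smoothLaplacian f * ψ ^ (2 * m + 2) * f) -
        ∑ i, totalIntegral (partialDeriv i f * partialDeriv i (ψ ^ (2 * m + 2)) * f) := by
  have hpow : ψ ^ (2 * m + 2) ∈ testFunctions _ :=
    mem_testFunctions_of_pow_dvd hψ (by simp) dvd_rfl
  have hsplit (i : Fin n) :
      totalIntegral (partialDeriv i f * partialDeriv i (ψ ^ (2 * m + 2) * f)) =
      weightedEnergy ψ (m + 1) (partialDeriv i f) +
        totalIntegral (partialDeriv i f * partialDeriv i (ψ ^ (2 * m + 2)) * f) := by
    have hdecomp : partialDeriv i f * partialDeriv i (ψ ^ (2 * m + 2) * f) =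
        (ψ ^ (m + 1) * partialDeriv i f) ^ 2 +
          partialDeriv i f * partialDeriv i (ψ ^ (2 * m + 2)) * f := by
      rw [dirDeriv_mul]
      ring
    rw [hdecomp, totalIntegral_add, weightedEnergy]
    · exact sq_mem_testFunctions (Ideal.mul_mem_right _ _
        (mem_testFunctions_of_pow_dvd hψ m.succ_ne_zero dvd_rfl))
    · exact Ideal.mul_mem_right _ _ (Ideal.mul_mem_left _ _ (dirDeriv_mem_testFunctions _ hpow))
  rw [mul_assoc, totalIntegral_smoothLaplacian_mul_eq_neg_sum f (Ideal.mul_mem_right _ _ hpow),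
    neg_neg, ← Finset.sum_sub_distrib]
  exact Finset.sum_congr rfl fun i _ => by rw [hsplit]; ring

theorem relBoundZero_gradient (hψ : ψ ∈ testFunctions _) {m : ℕ} (hm : m ≠ 0) :
    RelBoundZero (fun f => ∑ i, weightedEnergy ψ (m + 1) (partialDeriv i f))
      (fun f => weightedEnergy ψ (m + 2) (smoothLaplacian f)) (weightedEnergy ψ m) := by
  intro ε hε
  obtain ⟨K, hK, hΔ⟩ := exists_abs_totalIntegral_mul_le hψ (g := ψ ^ (2 * m + 2))
    (a := m + 2) (by simp) hm (pow_dvd_pow ψ (by lia)) (half_pos hε)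
  have hgrad (i : Fin n) := exists_abs_totalIntegral_mul_le hψ (a := m + 1) (by simp) hm
    (pow_dvd_derivation (partialDeriv i) (pow_dvd_pow ψ (by lia : m + 1 + m + 1 ≤ 2 * m + 2)))
    (half_pos one_pos)
  choose L hL hgradL using hgrad
  refine ⟨2 * (K + ∑ i, L i),
    mul_nonneg zero_le_two (add_nonneg hK (Finset.sum_nonneg fun i _ => hL i)), fun f => ?_⟩
  have hsum : -∑ i, totalIntegral (partialDeriv i f * partialDeriv i (ψ ^ (2 * m + 2)) * f) ≤
      1 / 2 * ∑ i, weightedEnergy ψ (m + 1) (partialDeriv i f) +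
        (∑ i, L i) * weightedEnergy ψ m f := by
    rw [← Finset.sum_neg_distrib, Finset.mul_sum, Finset.sum_mul, ← Finset.sum_add_distrib]
    exact Finset.sum_le_sum fun i _ => (neg_le_abs _).trans (hgradL i _ f)
  have hΔf := (neg_le_abs _).trans (hΔ (smoothLaplacian f) f)
  linarith [sum_weightedEnergy_partialDeriv hψ m f]

theorem weightedEnergy_sum_le (hψ : ψ ∈ testFunctions _) {m : ℕ} (hm : m ≠ 0)
    (f : Fin n → euclideanSmooth n) :
    weightedEnergy ψ m (∑ i, f i) ≤ n * ∑ i, weightedEnergy ψ m (f i) := by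
  have hmem (g : euclideanSmooth n) : (ψ ^ m * g) ^ 2 ∈ testFunctions _ :=
    sq_mem_testFunctions (Ideal.mul_mem_right _ _ (mem_testFunctions_of_pow_dvd hψ hm dvd_rfl))
  simp only [weightedEnergy]
  rw [← totalIntegral_sum _ fun i _ => hmem (f i)]
  refine totalIntegral_mul_const_le (hmem _) (sum_mem fun i _ => hmem (f i)) fun x => ?_
  rw [Finset.mul_sum]
  simpa using sq_sum_le_card_mul_sum_sq (s := Finset.univ) (f := fun i => (ψ ^ m * f i) x)

/-- The weighted energy of the derivatives of `u` of order at most two, the weight gaining one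
power of `ψ ^ 2` with each order. -/
def lowerEnergy (ψ : euclideanSmooth n) (k : ℕ) (u : euclideanSmooth n) : ℝ :=
  weightedEnergy ψ k u + ∑ i, weightedEnergy ψ (k + 1) (partialDeriv i u) +
    ∑ i, ∑ j, weightedEnergy ψ (k + 2) (partialDeriv j (partialDeriv i u))

/-- The weighted energy `∫ ψ ^ (2 * (k + 3)) * ‖∇Δu‖ ^ 2`. -/
def topEnergy (ψ : euclideanSmooth n) (k : ℕ) (u : euclideanSmooth n) : ℝ :=
  ∑ l, weightedEnergy ψ (k + 3) (gradLaplacian l u)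

theorem topEnergy_nonneg (ψ : euclideanSmooth n) (k : ℕ) (u : euclideanSmooth n) :
    0 ≤ topEnergy ψ k u :=
  Finset.sum_nonneg fun _ _ => weightedEnergy_nonneg _ _ _

theorem relBoundZero_lowerEnergy (hψ : ψ ∈ testFunctions _) {k : ℕ} (hk : k ≠ 0) :
    RelBoundZero (lowerEnergy ψ k) (topEnergy ψ k) (weightedEnergy ψ k) := by
  have hzero : RelBoundZero (weightedEnergy ψ k) (topEnergy ψ k) (weightedEnergy ψ k) :=
    .of_le (topEnergy_nonneg ψ k) zero_le_one fun u => (one_mul _).ge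
  have hfirst : RelBoundZero (fun u => ∑ i, weightedEnergy ψ (k + 1) (partialDeriv i u))
      (fun u => ∑ i, ∑ j, weightedEnergy ψ (k + 2) (partialDeriv j (partialDeriv i u)))
      (weightedEnergy ψ k) := by
    refine (relBoundZero_gradient hψ hk).mono_top (c := n + 1) (by positivity) fun u => ?_
    refine (weightedEnergy_sum_le hψ (by simp) _).trans ?_
    have hdiag (i : Fin n) := Finset.single_le_sum (s := Finset.univ)
      (f := fun j => weightedEnergy ψ (k + 2) (partialDeriv j (partialDeriv i u)))
      (fun j _ => weightedEnergy_nonneg _ _ _) (Finset.mem_univ i)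
    exact mul_le_mul (by simp) (Finset.sum_le_sum fun i _ => hdiag i)
      (Finset.sum_nonneg fun _ _ => weightedEnergy_nonneg _ _ _) (by positivity)
  have hsecond : RelBoundZero
      (fun u => ∑ i, ∑ j, weightedEnergy ψ (k + 2) (partialDeriv j (partialDeriv i u)))
      (topEnergy ψ k) (fun u => ∑ i, weightedEnergy ψ (k + 1) (partialDeriv i u)) := by
    refine .sum fun i hi ε hε => ?_
    obtain ⟨K, hK, hKf⟩ := relBoundZero_gradient hψ (m := k + 1) (by simp) ε hε
    refine ⟨K, hK, fun u => (hKf (partialDeriv i u)).trans ?_⟩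
    rw [gradLaplacian_eq_smoothLaplacian_partialDeriv]
    gcongr
    exact Finset.single_le_sum (f := fun i => weightedEnergy ψ (k + 1) (partialDeriv i u))
      (fun i _ => weightedEnergy_nonneg _ _ _) hi
  have hsecond_top := hsecond.absorb (fun u => Finset.sum_nonneg fun _ _ =>
    Finset.sum_nonneg fun _ _ => weightedEnergy_nonneg _ _ _) hfirst
  exact (hzero.add (hfirst.trans_top hsecond_top)).add hsecond_top

end Interpolation

section LowerOrder

variable {n : ℕ} {ψ : euclideanSmooth n} {k j : ℕ} {F F' : euclideanSmooth n → euclideanSmooth n}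

/-- `F u` is `ψ ^ j` times a test function whose `L²` norm is controlled by `lowerEnergy ψ k u`. -/
def IsLowerOrder (ψ : euclideanSmooth n) (k j : ℕ) (F : euclideanSmooth n → euclideanSmooth n) :
    Prop :=
  ∃ G : euclideanSmooth n → euclideanSmooth n, (∀ u, F u = ψ ^ j * G u) ∧
    (∀ u, G u ∈ testFunctions _) ∧
    ∃ K, 0 ≤ K ∧ ∀ u, totalIntegral (G u ^ 2) ≤ K * lowerEnergy ψ k u

theorem IsLowerOrder.add (hF : IsLowerOrder ψ k j F) (hF' : IsLowerOrder ψ k j F') :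
    IsLowerOrder ψ k j fun u => F u + F' u := by
  obtain ⟨G, hFG, hG, K, hK, hGK⟩ := hF
  obtain ⟨G', hFG', hG', K', hK', hGK'⟩ := hF'
  refine ⟨fun u => G u + G' u, fun u => ?_, fun u => add_mem (hG u) (hG' u),
    2 * (K + K'), by positivity, fun u => ?_⟩
  · simp only [hFG, hFG', mul_add]
  · linarith [totalIntegral_add_sq_le (hG u) (hG' u), hGK u, hGK' u]

theorem isLowerOrder_mul (hψ : ψ ∈ testFunctions _) {m : ℕ} (hm : m ≠ 0) {g : euclideanSmooth n}
    (hg : ψ ^ (j + m) ∣ g) {T : euclideanSmooth n → euclideanSmooth n}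
    (hT : ∀ u, weightedEnergy ψ m (T u) ≤ lowerEnergy ψ k u) :
    IsLowerOrder ψ k j fun u => g * T u := by
  obtain ⟨q, rfl⟩ := hg
  obtain ⟨K, hK, hqK⟩ := exists_totalIntegral_sq_le hψ hm (dvd_mul_right (ψ ^ m) q)
  refine ⟨fun u => ψ ^ m * q * T u, fun u => by ring, fun u => Ideal.mul_mem_right _ _
    (Ideal.mul_mem_right _ _ (mem_testFunctions_of_pow_dvd hψ hm dvd_rfl)), K, hK, fun u => ?_⟩
  exact (hqK (T u)).trans (by gcongr; exact hT u)

theorem IsLowerOrder.sum {ι : Type*} {s : Finset ι}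
    {F : ι → euclideanSmooth n → euclideanSmooth n} (hF : ∀ i ∈ s, IsLowerOrder ψ k j (F i)) :
    IsLowerOrder ψ k j fun u => ∑ i ∈ s, F i u := by
  induction s using Finset.cons_induction with
  | empty =>
    exact ⟨fun _ => 0, by simp, fun _ => zero_mem _, 0, le_rfl, fun u => by simp [totalIntegral]⟩
  | cons a s ha ih =>
    simp only [Finset.sum_cons]
    exact (hF a (Finset.mem_cons_self a s)).add
      (ih fun i hi => hF i (Finset.mem_cons_of_mem hi))

theorem IsLowerOrder.pow_mul (hF : IsLowerOrder ψ k 0 F) :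
    IsLowerOrder ψ k j fun u => ψ ^ j * F u := by
  obtain ⟨G, hFG, hG⟩ := hF
  exact ⟨G, fun u => by simp only [hFG, pow_zero, one_mul], hG⟩

theorem IsLowerOrder.totalIntegral_sq_le (hF : IsLowerOrder ψ k 0 F) :
    ∃ K, 0 ≤ K ∧ ∀ u, totalIntegral (F u ^ 2) ≤ K * lowerEnergy ψ k u := by
  obtain ⟨G, hFG, -, hK⟩ := hF
  simpa only [hFG, pow_zero, one_mul] using hK

theorem IsLowerOrder.relBoundZero_mul (hψ : ψ ∈ testFunctions _) (hj : j ≠ 0)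
    (hF : IsLowerOrder ψ k j F) (T : euclideanSmooth n → euclideanSmooth n) :
    RelBoundZero (fun u => |totalIntegral (T u * F u)|) (fun u => weightedEnergy ψ j (T u))
      (lowerEnergy ψ k) := by
  intro ε hε
  obtain ⟨G, hFG, hG, K, hK, hGK⟩ := hF
  refine ⟨(4 * ε)⁻¹ * K, by positivity, fun u => ?_⟩
  have hψT : ψ ^ j * T u ∈ testFunctions _ :=
    Ideal.mul_mem_right _ _ (mem_testFunctions_of_pow_dvd hψ hj dvd_rfl)
  calc |totalIntegral (T u * F u)| = |totalIntegral (ψ ^ j * T u * G u)| := by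
        rw [hFG]; congr 2; ring
    _ ≤ ε * weightedEnergy ψ j (T u) + (4 * ε)⁻¹ * totalIntegral (G u ^ 2) :=
        abs_totalIntegral_mul_le hψT (hG u) hε
    _ ≤ ε * weightedEnergy ψ j (T u) + (4 * ε)⁻¹ * (K * lowerEnergy ψ k u) := by
        gcongr; exact hGK u
    _ = ε * weightedEnergy ψ j (T u) + (4 * ε)⁻¹ * K * lowerEnergy ψ k u := by ring

theorem weightedEnergy_le_lowerEnergy (ψ : euclideanSmooth n) (k : ℕ) (u : euclideanSmooth n) :
    weightedEnergy ψ k u ≤ lowerEnergy ψ k u := by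
  have hfirst : 0 ≤ ∑ i, weightedEnergy ψ (k + 1) (partialDeriv i u) :=
    Finset.sum_nonneg fun i _ => weightedEnergy_nonneg _ _ _
  have hsecond : 0 ≤ ∑ i, ∑ j, weightedEnergy ψ (k + 2) (partialDeriv j (partialDeriv i u)) :=
    Finset.sum_nonneg fun i _ => Finset.sum_nonneg fun j _ => weightedEnergy_nonneg _ _ _
  rw [lowerEnergy]
  linarith

theorem weightedEnergy_partialDeriv_le_lowerEnergy (ψ : euclideanSmooth n) (k : ℕ) (i : Fin n)
    (u : euclideanSmooth n) :
    weightedEnergy ψ (k + 1) (partialDeriv i u) ≤ lowerEnergy ψ k u := by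
  have hsingle := Finset.single_le_sum
    (fun i _ => weightedEnergy_nonneg ψ (k + 1) (partialDeriv i u)) (Finset.mem_univ i)
  have hsecond : 0 ≤ ∑ i, ∑ j, weightedEnergy ψ (k + 2) (partialDeriv j (partialDeriv i u)) :=
    Finset.sum_nonneg fun i _ => Finset.sum_nonneg fun j _ => weightedEnergy_nonneg _ _ _
  rw [lowerEnergy]
  linarith [weightedEnergy_nonneg ψ k u]

theorem weightedEnergy_partialDeriv_partialDeriv_le_lowerEnergy (ψ : euclideanSmooth n) (k : ℕ)
    (i j : Fin n) (u : euclideanSmooth n) :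
    weightedEnergy ψ (k + 2) (partialDeriv j (partialDeriv i u)) ≤ lowerEnergy ψ k u := by
  have hfirst : 0 ≤ ∑ i, weightedEnergy ψ (k + 1) (partialDeriv i u) :=
    Finset.sum_nonneg fun i _ => weightedEnergy_nonneg _ _ _
  have hsingle := Finset.single_le_sum (fun j _ => weightedEnergy_nonneg ψ (k + 2)
    (partialDeriv j (partialDeriv i u))) (Finset.mem_univ j)
  have hrow := Finset.single_le_sum (fun i _ => Finset.sum_nonneg fun j (_ : j ∈ Finset.univ) =>
    weightedEnergy_nonneg ψ (k + 2) (partialDeriv j (partialDeriv i u))) (Finset.mem_univ i)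
  rw [lowerEnergy]
  linarith [weightedEnergy_nonneg ψ k u]

theorem pow_dvd_partialDeriv_pow (ψ : euclideanSmooth n) (k : ℕ) (i : Fin n) :
    ψ ^ (k + 2) ∣ partialDeriv i (ψ ^ (k + 3)) :=
  pow_dvd_derivation _ dvd_rfl

theorem pow_dvd_partialDeriv_partialDeriv_pow (ψ : euclideanSmooth n) (k : ℕ) (i j : Fin n) :
    ψ ^ (k + 1) ∣ partialDeriv i (partialDeriv j (ψ ^ (k + 3))) :=
  pow_dvd_derivation _ (pow_dvd_partialDeriv_pow ψ k j)

theorem pow_dvd_smoothLaplacian_pow (ψ : euclideanSmooth n) (k : ℕ) :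
    ψ ^ (k + 1) ∣ smoothLaplacian (ψ ^ (k + 3)) :=
  Finset.dvd_sum fun i _ => pow_dvd_partialDeriv_partialDeriv_pow ψ k i i

theorem isLowerOrder_mulCommutator (hψ : ψ ∈ testFunctions _) (hk : k ≠ 0) (l : Fin n) :
    IsLowerOrder ψ k 0 (mulCommutator (gradLaplacian l) (ψ ^ (k + 3))) := by
  have hthird : ψ ^ (0 + k) ∣ gradLaplacian l (ψ ^ (k + 3)) := by
    rw [zero_add]
    exact pow_dvd_derivation _ (pow_dvd_smoothLaplacian_pow ψ k)
  have hsecond (i : Fin n) : ψ ^ (0 + (k + 1)) ∣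
      2 * partialDeriv l (partialDeriv i (ψ ^ (k + 3))) := by
    rw [zero_add]
    exact (pow_dvd_partialDeriv_partialDeriv_pow ψ k l i).mul_left 2
  have hfirst (i : Fin n) : ψ ^ (0 + (k + 2)) ∣ partialDeriv i (ψ ^ (k + 3)) := by
    rw [zero_add]
    exact pow_dvd_partialDeriv_pow ψ k i
  rw [show mulCommutator (gradLaplacian l) (ψ ^ (k + 3)) = _ from
    funext (mulCommutator_gradLaplacian l (ψ ^ (k + 3)))]
  refine .add (.add (.add ?_ ?_) (.sum fun i _ => .add ?_ ?_)) ?_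
  · exact isLowerOrder_mul hψ hk hthird (weightedEnergy_le_lowerEnergy ψ k)
  · exact isLowerOrder_mul hψ (by simp) (by simpa using pow_dvd_smoothLaplacian_pow ψ k)
      (weightedEnergy_partialDeriv_le_lowerEnergy ψ k l)
  · exact isLowerOrder_mul hψ (by simp) (hsecond i)
      (weightedEnergy_partialDeriv_le_lowerEnergy ψ k i)
  · exact isLowerOrder_mul hψ (by simp) ((hfirst i).mul_left 2)
      (weightedEnergy_partialDeriv_partialDeriv_le_lowerEnergy ψ k i l)
  · simp only [smoothLaplacian, Finset.mul_sum]
    exact .sum fun i _ => isLowerOrder_mul hψ (by simp) (hfirst l)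
      (weightedEnergy_partialDeriv_partialDeriv_le_lowerEnergy ψ k i i)

theorem isLowerOrder_mulCommutator_mulCommutator (hψ : ψ ∈ testFunctions _) (hk : k ≠ 0)
    (l : Fin n) : IsLowerOrder ψ k (k + 3)
      (mulCommutator (mulCommutator (gradLaplacian l) (ψ ^ (k + 3))) (ψ ^ (k + 3))) := by
  have hfirst := pow_dvd_partialDeriv_pow ψ k
  have hfirst_sq {f g : euclideanSmooth n} (hf : ψ ^ (k + 2) ∣ f) (hg : ψ ^ (k + 2) ∣ g) :
      ψ ^ (k + 3 + (k + 1)) ∣ f * g := by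
    rw [show k + 3 + (k + 1) = k + 2 + (k + 2) by ring, pow_add]
    exact mul_dvd_mul hf hg
  have hfirst_second {f g : euclideanSmooth n} (hf : ψ ^ (k + 2) ∣ f) (hg : ψ ^ (k + 1) ∣ g) :
      ψ ^ (k + 3 + k) ∣ f * g := by
    rw [show k + 3 + k = k + 2 + (k + 1) by ring, pow_add]
    exact mul_dvd_mul hf hg
  rw [show mulCommutator (mulCommutator (gradLaplacian l) (ψ ^ (k + 3))) (ψ ^ (k + 3)) = _ from
    funext (mulCommutator_mulCommutator_gradLaplacian l (ψ ^ (k + 3)))]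
  refine .add (.add ?_ ?_) (.sum fun i _ => ?_)
  · refine isLowerOrder_mul hψ hk (dvd_add ?_ (Finset.dvd_sum fun i _ => ?_))
      (weightedEnergy_le_lowerEnergy ψ k)
    · exact hfirst_second ((hfirst l).mul_left 2) (pow_dvd_smoothLaplacian_pow ψ k)
    · exact hfirst_second ((hfirst i).mul_left 4) (pow_dvd_partialDeriv_partialDeriv_pow ψ k l i)
  · refine isLowerOrder_mul hψ (by simp) (Finset.dvd_sum fun i _ => ?_)
      (weightedEnergy_partialDeriv_le_lowerEnergy ψ k l)
    exact (pow_two (partialDeriv i (ψ ^ (k + 3))) ▸ hfirst_sq (hfirst i) (hfirst i)).mul_left 2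
  · exact isLowerOrder_mul hψ (by simp) (hfirst_sq ((hfirst i).mul_left 4) (hfirst l))
      (weightedEnergy_partialDeriv_le_lowerEnergy ψ k i)

end LowerOrder

section EnergyEstimate

variable {n : ℕ} {ψ : euclideanSmooth n} {k : ℕ}

/-- The absolute values of the three kinds of commutator terms produced by testing the equation
with `η ^ 2 * u` and the stability inequality with `η * u`, where `η = ψ ^ (k + 3)`. -/
def commutatorError (ψ : euclideanSmooth n) (k : ℕ) (u : euclideanSmooth n) : ℝ :=
  ∑ l, totalIntegral (mulCommutator (gradLaplacian l) (ψ ^ (k + 3)) u ^ 2) +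
    ∑ l, |totalIntegral (gradLaplacian l u *
      (ψ ^ (k + 3) * mulCommutator (gradLaplacian l) (ψ ^ (k + 3)) u))| +
    ∑ l, |totalIntegral (gradLaplacian l u *
      mulCommutator (mulCommutator (gradLaplacian l) (ψ ^ (k + 3))) (ψ ^ (k + 3)) u)|

theorem relBoundZero_commutatorError (hψ : ψ ∈ testFunctions _) (hk : k ≠ 0) :
    RelBoundZero (commutatorError ψ k) (topEnergy ψ k) (weightedEnergy ψ k) := by
  refine RelBoundZero.trans_bot (topEnergy_nonneg ψ k) ?_ (relBoundZero_lowerEnergy hψ hk)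
  have hsq (l : Fin n) : RelBoundZero
      (fun u => totalIntegral (mulCommutator (gradLaplacian l) (ψ ^ (k + 3)) u ^ 2))
      (fun u => weightedEnergy ψ (k + 3) (gradLaplacian l u)) (lowerEnergy ψ k) := by
    obtain ⟨K, hK, hCK⟩ := (isLowerOrder_mulCommutator hψ hk l).totalIntegral_sq_le
    exact .of_le (fun u => weightedEnergy_nonneg _ _ _) hK hCK
  exact ((RelBoundZero.sum fun l _ => hsq l).add (.sum fun l _ =>
    (isLowerOrder_mulCommutator hψ hk l).pow_mul.relBoundZero_mul hψ (by simp) _)).add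
      (.sum fun l _ => (isLowerOrder_mulCommutator_mulCommutator hψ hk l).relBoundZero_mul hψ
        (by simp) _)

/-- The pairing `∫ ((-Δ)³u) * u * ψ ^ (2 * (k + 3))`, which for a solution of the triharmonic
Lane–Emden equation is the weighted integral of `|u| ^ (p + 1)`. -/
def potentialEnergy (ψ : euclideanSmooth n) (k : ℕ) (u : euclideanSmooth n) : ℝ :=
  -totalIntegral (smoothLaplacian (smoothLaplacian (smoothLaplacian u)) *
    (ψ ^ (k + 3) * (ψ ^ (k + 3) * u)))

theorem gradLaplacian_mem_testFunctions (l : Fin n) {f : euclideanSmooth n}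
    (hf : f ∈ testFunctions _) : gradLaplacian l f ∈ testFunctions _ :=
  dirDeriv_mem_testFunctions _ (sum_mem fun _ _ =>
    dirDeriv_mem_testFunctions _ (dirDeriv_mem_testFunctions _ hf))

theorem totalIntegral_gradLaplacian_mul (l : Fin n) {e : euclideanSmooth n}
    (he : e ∈ testFunctions _) (u : euclideanSmooth n) :
    totalIntegral (gradLaplacian l u * gradLaplacian l (e * (e * u))) =
      totalIntegral ((e * gradLaplacian l u) ^ 2) +
      2 * totalIntegral (gradLaplacian l u * (e * mulCommutator (gradLaplacian l) e u)) +
      totalIntegral (gradLaplacian l u *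
        mulCommutator (mulCommutator (gradLaplacian l) e) e u) := by
  have hcomm (v : euclideanSmooth n) : mulCommutator (gradLaplacian l) e v ∈ testFunctions _ :=
    mulCommutator_mem (fun _ => gradLaplacian_mem_testFunctions l) he v
  have hmixed := Ideal.mul_mem_left _ (gradLaplacian l u) (Ideal.mul_mem_left _ e (hcomm u))
  have hdouble := Ideal.mul_mem_left _ (gradLaplacian l u)
    (mulCommutator_mem (fun v _ => hcomm v) he u)
  have hsq := sq_mem_testFunctions (Ideal.mul_mem_right (gradLaplacian l u) _ he)
  rw [mul_apply_mul_mul, two_mul, two_mul, totalIntegral_add (add_mem hsq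
    (add_mem hmixed hmixed)) hdouble, totalIntegral_add hsq (add_mem hmixed hmixed),
    totalIntegral_add hmixed hmixed]

theorem totalIntegral_gradLaplacian_mul_sq (l : Fin n) {e : euclideanSmooth n}
    (he : e ∈ testFunctions _) (u : euclideanSmooth n) :
    totalIntegral (gradLaplacian l (e * u) ^ 2) =
      totalIntegral (gradLaplacian l u * gradLaplacian l (e * (e * u))) +
      totalIntegral (mulCommutator (gradLaplacian l) e u ^ 2) -
      totalIntegral (gradLaplacian l u *
        mulCommutator (mulCommutator (gradLaplacian l) e) e u) := by
  have hcomm (v : euclideanSmooth n) : mulCommutator (gradLaplacian l) e v ∈ testFunctions _ :=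
    mulCommutator_mem (fun _ => gradLaplacian_mem_testFunctions l) he v
  have hdouble := Ideal.mul_mem_left _ (gradLaplacian l u)
    (mulCommutator_mem (fun v _ => hcomm v) he u)
  have hpair := Ideal.mul_mem_left _ (gradLaplacian l u)
    (gradLaplacian_mem_testFunctions l (Ideal.mul_mem_right (e * u) _ he))
  have hsq := sq_mem_testFunctions (hcomm u)
  rw [apply_mul_sq, totalIntegral_sub (add_mem hpair hsq) hdouble, totalIntegral_add hpair hsq]

theorem energy_le_commutatorError (hψ : ψ ∈ testFunctions _) {p : ℝ} (hp : 1 < p)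
    {u : euclideanSmooth n} (hstable : p * potentialEnergy ψ k u ≤
      ∑ l, totalIntegral (gradLaplacian l (ψ ^ (k + 3) * u) ^ 2)) :
    potentialEnergy ψ k u + topEnergy ψ k u ≤ (2 / (p - 1) + 2) * commutatorError ψ k u := by
  have he : ψ ^ (k + 3) ∈ testFunctions _ := mem_testFunctions_of_pow_dvd hψ (by simp) dvd_rfl
  have hpotential : potentialEnergy ψ k u = ∑ l, totalIntegral (gradLaplacian l u *
      gradLaplacian l (ψ ^ (k + 3) * (ψ ^ (k + 3) * u))) := by
    rw [potentialEnergy, totalIntegral_trilaplacian_mul u (Ideal.mul_mem_right _ _ he), neg_neg]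
  have htop := hpotential
  simp only [totalIntegral_gradLaplacian_mul _ he, Finset.sum_add_distrib, ← Finset.mul_sum]
    at htop
  simp only [totalIntegral_gradLaplacian_mul_sq _ he, Finset.sum_add_distrib,
    Finset.sum_sub_distrib, ← hpotential] at hstable
  rw [commutatorError]
  set Q := ∑ l, totalIntegral (mulCommutator (gradLaplacian l) (ψ ^ (k + 3)) u ^ 2)
  set P := ∑ l, totalIntegral (gradLaplacian l u *
    (ψ ^ (k + 3) * mulCommutator (gradLaplacian l) (ψ ^ (k + 3)) u))
  set W := ∑ l, totalIntegral (gradLaplacian l u *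
    mulCommutator (mulCommutator (gradLaplacian l) (ψ ^ (k + 3))) (ψ ^ (k + 3)) u)
  have hP' : |P| ≤ _ := Finset.abs_sum_le_sum_abs _ _
  have hW' : |W| ≤ _ := Finset.abs_sum_le_sum_abs _ _
  have hQ : 0 ≤ Q := Finset.sum_nonneg fun l _ => totalIntegral_sq_nonneg _
  have hp0 : 0 < p - 1 := sub_pos.2 hp
  have hpot : potentialEnergy ψ k u ≤ (Q + |W|) / (p - 1) := by
    rw [le_div_iff₀ hp0]
    linarith [neg_le_abs W]
  have hexpand : potentialEnergy ψ k u = topEnergy ψ k u + 2 * P + W := htop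
  calc potentialEnergy ψ k u + topEnergy ψ k u
      ≤ 2 * ((Q + |W|) / (p - 1)) + 2 * (|P| + |W|) := by
        linarith [neg_le_abs P, neg_le_abs W, abs_nonneg W]
    _ ≤ 2 * ((Q + |P| + |W|) / (p - 1)) + 2 * (Q + |P| + |W|) := by
        gcongr <;> linarith [abs_nonneg P]
    _ = (2 / (p - 1) + 2) * (Q + |P| + |W|) := by ring
    _ ≤ _ := by gcongr

theorem exists_energy_le_weightedEnergy (hψ : ψ ∈ testFunctions _) (hk : k ≠ 0) {p : ℝ}
    (hp : 1 < p) : ∃ C, 0 ≤ C ∧ ∀ u : euclideanSmooth n, 0 ≤ potentialEnergy ψ k u →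
      p * potentialEnergy ψ k u ≤ ∑ l, totalIntegral (gradLaplacian l (ψ ^ (k + 3) * u) ^ 2) →
      potentialEnergy ψ k u + topEnergy ψ k u ≤ C * weightedEnergy ψ k u := by
  have hc : 0 < 2 / (p - 1) + 2 := by
    have := sub_pos.2 hp
    positivity
  set c := 2 / (p - 1) + 2
  obtain ⟨K, hK, herror⟩ := relBoundZero_commutatorError hψ hk (1 / (2 * c)) (by positivity)
  refine ⟨2 * (c * K), by positivity, fun u hpos hstable => ?_⟩
  have key : potentialEnergy ψ k u + topEnergy ψ k u ≤
      1 / 2 * topEnergy ψ k u + c * K * weightedEnergy ψ k u :=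
    calc potentialEnergy ψ k u + topEnergy ψ k u ≤ c * commutatorError ψ k u :=
          energy_le_commutatorError hψ hp hstable
      _ ≤ c * (1 / (2 * c) * topEnergy ψ k u + K * weightedEnergy ψ k u) := by
          gcongr; exact herror u
      _ = 1 / 2 * topEnergy ψ k u + c * K * weightedEnergy ψ k u := by field_simp
  linarith

end EnergyEstimate

section StableSolutions

variable {n : ℕ} {p : ℝ}

/-- A smooth stable solution of the triharmonic Lane–Emden equation
`(-Δ)³u = |u| ^ (p - 1) * u` on `ℝⁿ`. -/
structure IsStableTriharmonicSolution (p : ℝ) (u : EuclideanSpace ℝ (Fin n) → ℝ) : Prop where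
  contDiff : ContDiff ℝ (⊤ : ℕ∞) u
  equation : ∀ x, laplacian (laplacian (laplacian u)) x = -(|u x| ^ (p - 1) * u x)
  stable : ∀ φ : EuclideanSpace ℝ (Fin n) → ℝ, ContDiff ℝ (⊤ : ℕ∞) φ → HasCompactSupport φ →
    p * (∫ x, |u x| ^ (p - 1) * φ x ^ 2) ≤ ∫ x, ‖gradient (laplacian φ) x‖ ^ 2

/-- The local energy `∫ |u| ^ (p + 1) + ∫ ‖∇Δu‖ ^ 2` over the ball of radius `R` about `x₀`. -/
def ballEnergy (p : ℝ) (u : EuclideanSpace ℝ (Fin n) → ℝ) (x₀ : EuclideanSpace ℝ (Fin n))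
    (R : ℝ) : ℝ :=
  (∫ x in Metric.ball x₀ R, |u x| ^ (p + 1)) +
    ∫ x in Metric.ball x₀ R, ‖gradient (laplacian u) x‖ ^ 2

theorem abs_rpow_sub_one_mul_sq (hp : 1 < p) (v : ℝ) :
    |v| ^ (p - 1) * v ^ 2 = |v| ^ (p + 1) := by
  rcases eq_or_ne v 0 with rfl | hv
  · rw [abs_zero, Real.zero_rpow (by linarith), Real.zero_rpow (by linarith), zero_mul]
  · rw [← sq_abs, ← Real.rpow_natCast, ← Real.rpow_add (abs_pos.2 hv)]
    congr 1
    push_cast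
    ring

theorem IsStableTriharmonicSolution.trilaplacian_mul_apply (hp : 1 < p) {u : euclideanSmooth n}
    (hu : IsStableTriharmonicSolution p u) (ψ : euclideanSmooth n) (k : ℕ)
    (x : EuclideanSpace ℝ (Fin n)) :
    (smoothLaplacian (smoothLaplacian (smoothLaplacian u)) *
      (ψ ^ (k + 3) * (ψ ^ (k + 3) * u))) x = -(|u x| ^ (p + 1) * ψ x ^ (2 * (k + 3))) := by
  have heq : smoothLaplacian (smoothLaplacian (smoothLaplacian u)) x =
      -(|u x| ^ (p - 1) * u x) := by
    rw [← hu.equation x, laplacian_eq_smoothLaplacian, laplacian_eq_smoothLaplacian,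
      laplacian_eq_smoothLaplacian]
  change smoothLaplacian (smoothLaplacian (smoothLaplacian u)) x *
    (ψ x ^ (k + 3) * (ψ x ^ (k + 3) * u x)) = _
  rw [heq, ← abs_rpow_sub_one_mul_sq hp]
  ring

theorem IsStableTriharmonicSolution.potentialEnergy_eq (hp : 1 < p) {u : euclideanSmooth n}
    (hu : IsStableTriharmonicSolution p u) (ψ : euclideanSmooth n) (k : ℕ) :
    potentialEnergy ψ k u = ∫ x, |u x| ^ (p + 1) * ψ x ^ (2 * (k + 3)) := by
  rw [potentialEnergy, totalIntegral, ← integral_neg]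
  simp only [hu.trilaplacian_mul_apply hp, neg_neg]

theorem IsStableTriharmonicSolution.integrable_potential (hp : 1 < p) {u : euclideanSmooth n}
    (hu : IsStableTriharmonicSolution p u) {ψ : euclideanSmooth n} (hψ : ψ ∈ testFunctions _)
    (k : ℕ) : Integrable fun x => |u x| ^ (p + 1) * ψ x ^ (2 * (k + 3)) := by
  have hmem : smoothLaplacian (smoothLaplacian (smoothLaplacian u)) *
      (ψ ^ (k + 3) * (ψ ^ (k + 3) * u)) ∈ testFunctions _ :=
    mem_testFunctions_of_pow_dvd hψ (m := k + 3) (by simp)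
      (Dvd.dvd.mul_left (dvd_mul_right _ _) _)
  have hint := (integrable_of_mem_testFunctions hmem).neg
  simpa only [Pi.neg_def, hu.trilaplacian_mul_apply hp, neg_neg] using hint

theorem rpow_mul_even_pow_nonneg (u ψ : euclideanSmooth n) (p : ℝ) (k : ℕ)
    (x : EuclideanSpace ℝ (Fin n)) : 0 ≤ |u x| ^ (p + 1) * ψ x ^ (2 * (k + 3)) := by
  rw [pow_mul]
  positivity

theorem IsStableTriharmonicSolution.weighted_stability (hp : 1 < p) {u : euclideanSmooth n}
    (hu : IsStableTriharmonicSolution p u) {ψ : euclideanSmooth n} (hψ : ψ ∈ testFunctions _)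
    (k : ℕ) : p * potentialEnergy ψ k u ≤
      ∑ l, totalIntegral (gradLaplacian l (ψ ^ (k + 3) * u) ^ 2) := by
  have hφ : ψ ^ (k + 3) * u ∈ testFunctions _ :=
    mem_testFunctions_of_pow_dvd hψ (m := k + 3) (by simp) (dvd_mul_right _ _)
  have hstable := hu.stable _ (smoothAlgebra_contDiff (ψ ^ (k + 3) * u)) hφ
  simp only [norm_gradient_laplacian_sq] at hstable
  refine (le_of_eq ?_).trans (hstable.trans (le_of_eq (integral_finsetSum _ fun l _ =>
    integrable_of_mem_testFunctions
      (sq_mem_testFunctions (gradLaplacian_mem_testFunctions l hφ)))))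
  rw [hu.potentialEnergy_eq hp]
  refine congrArg (p * ·) (integral_congr_ae (Eventually.of_forall fun x => ?_))
  change _ = |u x| ^ (p - 1) * (ψ x ^ (k + 3) * u x) ^ 2
  simp only [← abs_rpow_sub_one_mul_sq hp]
  ring

theorem exists_energy_le_of_isStable (hp : 1 < p) {ψ : euclideanSmooth n}
    (hψ : ψ ∈ testFunctions _) {k : ℕ} (hk : k ≠ 0) :
    ∃ C, 0 ≤ C ∧ ∀ u : euclideanSmooth n, IsStableTriharmonicSolution p u →
      potentialEnergy ψ k u + topEnergy ψ k u ≤ C * weightedEnergy ψ k u := by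
  obtain ⟨C, hC, henergy⟩ := exists_energy_le_weightedEnergy hψ hk hp
  refine ⟨C, hC, fun u hu => henergy u ?_ (hu.weighted_stability hp hψ k)⟩
  rw [hu.potentialEnergy_eq hp]
  exact integral_nonneg (rpow_mul_even_pow_nonneg u ψ p k)

theorem IsStableTriharmonicSolution.ballEnergy_le (hp : 1 < p) {u : euclideanSmooth n}
    (hu : IsStableTriharmonicSolution p u) {ψ : euclideanSmooth n} (hψ : ψ ∈ testFunctions _)
    (k : ℕ) {x₀ : EuclideanSpace ℝ (Fin n)} {R : ℝ} (hone : ∀ x ∈ Metric.ball x₀ R, ψ x = 1) :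
    ballEnergy p u x₀ R ≤ potentialEnergy ψ k u + topEnergy ψ k u := by
  have hweight (l : Fin n) : (ψ ^ (k + 3) * gradLaplacian l u) ^ 2 ∈ testFunctions _ :=
    sq_mem_testFunctions (mem_testFunctions_of_pow_dvd hψ (m := k + 3) (by simp)
      (dvd_mul_right _ _))
  have htop : topEnergy ψ k u = ∫ x, ∑ l, (ψ x ^ (k + 3) * gradLaplacian l u x) ^ 2 :=
    (integral_finsetSum _ fun l _ => integrable_of_mem_testFunctions (hweight l)).symm
  rw [hu.potentialEnergy_eq hp, htop]
  refine add_le_add ?_ ?_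
  · refine le_of_eq_of_le (setIntegral_congr_fun measurableSet_ball fun x hx => ?_)
      (setIntegral_le_integral (hu.integrable_potential hp hψ k)
        (Eventually.of_forall (rpow_mul_even_pow_nonneg u ψ p k)))
    simp only [hone x hx, one_pow, mul_one]
  · refine le_of_eq_of_le (setIntegral_congr_fun measurableSet_ball fun x hx => ?_)
      (setIntegral_le_integral (integrable_finsetSum _ fun l _ =>
        integrable_of_mem_testFunctions (hweight l))
        (Eventually.of_forall fun x => Finset.sum_nonneg fun l _ => sq_nonneg _))
    simp only [norm_gradient_laplacian_sq]
    refine Finset.sum_congr rfl fun l _ => ?_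
    rw [hone x hx, one_pow, one_mul]

theorem weightedEnergy_le_setIntegral {ψ : euclideanSmooth n} (hψ : ψ ∈ testFunctions _)
    (hψ0 : ∀ x, 0 ≤ ψ x) (hψ1 : ∀ x, ψ x ≤ 1) {s : Set (EuclideanSpace ℝ (Fin n))}
    (hs : MeasurableSet s) (hzero : ∀ x ∉ s, ψ x = 0) {k : ℕ} (hk : k ≠ 0)
    {u : euclideanSmooth n} (hu : IntegrableOn (fun x => u x ^ 2) s) :
    weightedEnergy ψ k u ≤ ∫ x in s, u x ^ 2 := by
  rw [← integral_indicator hs]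
  refine integral_mono (integrable_of_mem_testFunctions (sq_mem_testFunctions
    (mem_testFunctions_of_pow_dvd hψ hk (dvd_mul_right _ u)))) (hu.integrable_indicator hs)
    fun x => ?_
  change (ψ x ^ k * u x) ^ 2 ≤ _
  by_cases hx : x ∈ s
  · rw [Set.indicator_of_mem hx, mul_pow]
    exact mul_le_of_le_one_left (sq_nonneg _)
      (pow_le_one₀ (pow_nonneg (hψ0 x) _) (pow_le_one₀ (hψ0 x) (hψ1 x)))
  · rw [Set.indicator_of_notMem hx, hzero x hx, zero_pow hk, zero_mul, zero_pow two_ne_zero]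

theorem exists_mul_sq_le_half_rpow_add (hp : 1 < p) {k : ℕ} (hk : 6 ≤ (p - 1) * k) {K : ℝ}
    (hK : 0 ≤ K) : ∃ C, 0 ≤ C ∧ ∀ t v : ℝ, 0 ≤ t → t ≤ 1 →
      K * (t ^ k * v) ^ 2 ≤ 1 / 2 * (|v| ^ (p + 1) * t ^ (2 * (k + 3))) + C := by
  have hp0 : 0 < p - 1 := sub_pos.2 hp
  refine ⟨1 / 2 * (2 * K) ^ ((p + 1) / (p - 1)), by positivity, fun t v ht0 ht1 => ?_⟩
  have hconj : ((p + 1) / 2).HolderConjugate ((p + 1) / (p - 1)) := by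
    refine Real.holderConjugate_iff.2 ⟨by linarith, ?_⟩
    have : p + 1 ≠ 0 := by linarith
    field_simp
    ring
  have hyoung := Real.young_inequality_of_nonneg (sq_nonneg (t ^ k * v))
    (by positivity : 0 ≤ 2 * K) hconj
  have hweight : (t ^ k) ^ (p + 1) ≤ t ^ (2 * (k + 3)) := by
    rw [← Real.rpow_natCast, ← Real.rpow_mul ht0, ← Real.rpow_natCast]
    refine Real.rpow_le_rpow_of_exponent_ge' ht0 ht1 (by positivity) ?_
    push_cast
    linarith
  have hsq : ((t ^ k * v) ^ 2) ^ ((p + 1) / 2) = |v| ^ (p + 1) * (t ^ k) ^ (p + 1) := by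
    rw [← sq_abs, ← Real.rpow_natCast, ← Real.rpow_mul (abs_nonneg _), Nat.cast_ofNat,
      mul_div_cancel₀ _ two_ne_zero, abs_mul, Real.mul_rpow (abs_nonneg _) (abs_nonneg _),
      abs_of_nonneg (pow_nonneg ht0 k), mul_comm]
  have hpot : ((t ^ k * v) ^ 2) ^ ((p + 1) / 2) / ((p + 1) / 2) ≤
      |v| ^ (p + 1) * t ^ (2 * (k + 3)) :=
    (div_le_self (by positivity) (by linarith)).trans (hsq ▸ by gcongr)
  have hconst : (2 * K) ^ ((p + 1) / (p - 1)) / ((p + 1) / (p - 1)) ≤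
      (2 * K) ^ ((p + 1) / (p - 1)) :=
    div_le_self (by positivity) ((one_le_div hp0).2 (by linarith))
  linarith

theorem exists_mul_weightedEnergy_le (hp : 1 < p) {ψ : euclideanSmooth n}
    (hψ : ψ ∈ testFunctions _) (hψ0 : ∀ x, 0 ≤ ψ x) (hψ1 : ∀ x, ψ x ≤ 1) {k : ℕ}
    (hk : 6 ≤ (p - 1) * k) (hk0 : k ≠ 0) {K : ℝ} (hK : 0 ≤ K) :
    ∃ C, 0 ≤ C ∧ ∀ u : euclideanSmooth n, IsStableTriharmonicSolution p u →
      K * weightedEnergy ψ k u ≤ 1 / 2 * potentialEnergy ψ k u + C := by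
  obtain ⟨C, hC, hyoung⟩ := exists_mul_sq_le_half_rpow_add hp hk hK
  have hcompact : IsCompact (tsupport ψ) := hψ
  have hmeas : MeasurableSet (tsupport ψ) := (isClosed_tsupport ψ).measurableSet
  refine ⟨∫ x, (tsupport ψ).indicator (fun _ => C) x, integral_nonneg fun x =>
    Set.indicator_nonneg (fun _ _ => hC) x, fun u hu => ?_⟩
  have hind : Integrable ((tsupport ψ).indicator fun _ => C) :=
    (integrableOn_const hcompact.measure_lt_top.ne).integrable_indicator hmeas
  have hpot := (hu.integrable_potential hp hψ k).const_mul (1 / 2)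
  rw [hu.potentialEnergy_eq hp, weightedEnergy, totalIntegral, ← integral_const_mul,
    ← integral_const_mul, ← integral_add hpot hind]
  refine integral_mono ((integrable_of_mem_testFunctions (sq_mem_testFunctions
    (mem_testFunctions_of_pow_dvd hψ hk0 (dvd_mul_right _ u)))).const_mul K) (hpot.add hind)
    fun x => ?_
  change K * (ψ x ^ k * u x) ^ 2 ≤
    1 / 2 * (|u x| ^ (p + 1) * ψ x ^ (2 * (k + 3))) + (tsupport ψ).indicator (fun _ => C) x
  by_cases hx : x ∈ tsupport ψ
  · rw [Set.indicator_of_mem hx]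
    exact hyoung _ _ (hψ0 x) (hψ1 x)
  · simp [Set.indicator_of_notMem hx, image_eq_zero_of_notMem_tsupport hx, hk0]

theorem exists_ballEnergy_zero_one_le (n : ℕ) (hp : 1 < p) :
    ∃ C, 0 < C ∧ ∀ u : EuclideanSpace ℝ (Fin n) → ℝ, IsStableTriharmonicSolution p u →
      ballEnergy p u 0 1 ≤ C * ∫ x in Metric.ball 0 2, u x ^ 2 ∧ ballEnergy p u 0 1 ≤ C := by
  have hp0 : 0 < p - 1 := sub_pos.2 hp
  obtain ⟨k, hk⟩ := exists_nat_ge (6 / (p - 1))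
  rw [div_le_iff₀' hp0] at hk
  have hk0 : k ≠ 0 := by
    rintro rfl
    norm_num at hk
  let bump : ContDiffBump (0 : EuclideanSpace ℝ (Fin n)) := ⟨1, 2, one_pos, one_lt_two⟩
  let ψ : euclideanSmooth n := ⟨bump, bump.contDiff⟩
  have hψ : ψ ∈ testFunctions _ := bump.hasCompactSupport
  obtain ⟨K, hK, henergy⟩ := exists_energy_le_of_isStable hp hψ hk0
  obtain ⟨C, hC, hyoung⟩ := exists_mul_weightedEnergy_le hp hψ (fun _ => bump.nonneg)
    (fun _ => bump.le_one) hk hk0 hK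
  refine ⟨K + 2 * C + 1, by positivity, fun u hu => ?_⟩
  lift u to euclideanSmooth n using hu.contDiff
  have hball := hu.ballEnergy_le hp hψ k (x₀ := 0) (R := 1) fun x hx =>
    bump.one_of_mem_closedBall (Metric.ball_subset_closedBall hx)
  have hweighted : weightedEnergy ψ k u ≤ ∫ x in Metric.ball 0 2, u x ^ 2 :=
    weightedEnergy_le_setIntegral hψ (fun _ => bump.nonneg) (fun _ => bump.le_one)
      measurableSet_ball (fun x hx => bump.zero_of_le_dist (not_lt.1 hx)) hk0
      ((((smoothAlgebra_contDiff u).continuous.pow 2).continuousOn.integrableOn_compact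
        (isCompact_closedBall 0 2)).mono_set Metric.ball_subset_closedBall)
  constructor
  · calc ballEnergy p u 0 1 ≤ K * weightedEnergy ψ k u := hball.trans (henergy u hu)
      _ ≤ (K + 2 * C + 1) * ∫ x in Metric.ball 0 2, u x ^ 2 :=
        mul_le_mul (by linarith) hweighted (weightedEnergy_nonneg _ _ _) (by positivity)
  · linarith [henergy u hu, hyoung u hu, topEnergy_nonneg ψ k u]

end StableSolutions

section Rescaling

section AffineComp

variable {E : Type*} [NormedAddCommGroup E] [NormedSpace ℝ E]

/-- Composition with the affine map `x ↦ x₀ + R • x`, as an endomorphism of `C^∞(E)`. -/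
def affineComp (x₀ : E) (R : ℝ) : smoothAlgebra E →ₐ[ℝ] smoothAlgebra E where
  toFun f := ⟨fun x => f (x₀ + R • x), (smoothAlgebra_contDiff f).comp
    (contDiff_const.add (contDiff_const_smul R))⟩
  map_one' := rfl
  map_mul' _ _ := rfl
  map_zero' := rfl
  map_add' _ _ := rfl
  commutes' _ := rfl

theorem affineComp_apply (x₀ : E) (R : ℝ) (f : smoothAlgebra E) (x : E) :
    affineComp x₀ R f x = f (x₀ + R • x) := rfl

theorem dirDeriv_affineComp (v x₀ : E) (R : ℝ) (f : smoothAlgebra E) :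
    dirDeriv v (affineComp x₀ R f) = R • affineComp x₀ R (dirDeriv v f) := by
  ext x
  have hinner : HasFDerivAt (fun y => x₀ + R • y) (R • ContinuousLinearMap.id ℝ E) x :=
    ((hasFDerivAt_id x).const_smul R).const_add x₀
  have hcomp := (smoothAlgebra_differentiable f (x₀ + R • x)).hasFDerivAt.comp x hinner
  change fderiv ℝ (f ∘ fun y => x₀ + R • y) x v = R * fderiv ℝ f (x₀ + R • x) v
  simp [hcomp.fderiv]

theorem affineComp_affineComp_inv (x₀ : E) {R : ℝ} (hR : R ≠ 0) (f : smoothAlgebra E) :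
    affineComp x₀ R (affineComp (-(R⁻¹ • x₀)) R⁻¹ f) = f := by
  ext x
  simp [affineComp_apply, smul_smul, hR]

theorem affineComp_mem_testFunctions (x₀ : E) {R : ℝ} (hR : R ≠ 0) {f : smoothAlgebra E}
    (hf : f ∈ testFunctions E) : affineComp x₀ R f ∈ testFunctions E :=
  HasCompactSupport.comp_homeomorph hf
    ((Homeomorph.smulOfNeZero R hR).trans (Homeomorph.addLeft x₀))

variable [MeasurableSpace E] [BorelSpace E] [FiniteDimensional ℝ E] {μ : Measure E}
  [μ.IsAddHaarMeasure]

theorem integral_comp_affine (g : E → ℝ) (x₀ : E) {R : ℝ} (hR : 0 < R) :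
    ∫ x, g (x₀ + R • x) ∂μ = (R ^ Module.finrank ℝ E)⁻¹ * ∫ x, g x ∂μ := by
  rw [Measure.integral_comp_smul_of_nonneg μ (fun x => g (x₀ + x)) R (hR := hR.le),
    integral_add_left_eq_self g x₀, smul_eq_mul]

theorem setIntegral_ball_comp_affine (g : E → ℝ) (x₀ : E) {R : ℝ} (hR : 0 < R) (r : ℝ) :
    ∫ x in Metric.ball 0 r, g (x₀ + R • x) ∂μ =
      (R ^ Module.finrank ℝ E)⁻¹ * ∫ x in Metric.ball x₀ (r * R), g x ∂μ := by
  rw [← integral_indicator measurableSet_ball, ← integral_indicator measurableSet_ball,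
    ← integral_comp_affine _ x₀ hR]
  refine integral_congr_ae (Eventually.of_forall fun x => ?_)
  have hmem : x₀ + R • x ∈ Metric.ball x₀ (r * R) ↔ x ∈ Metric.ball 0 r := by
    rw [mem_ball_iff_norm, add_sub_cancel_left, norm_smul, Real.norm_of_nonneg hR.le, mul_comm r,
      mul_lt_mul_iff_right₀ hR, mem_ball_zero_iff]
  beta_reduce
  by_cases hx : x ∈ Metric.ball 0 r
  · rw [Set.indicator_of_mem hx, Set.indicator_of_mem (hmem.2 hx)]
  · rw [Set.indicator_of_notMem hx, Set.indicator_of_notMem (hmem.not.2 hx)]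

end AffineComp

variable {n : ℕ} {p R c : ℝ} {u : euclideanSmooth n}

theorem smoothLaplacian_smul (c : ℝ) (f : euclideanSmooth n) :
    smoothLaplacian (c • f) = c • smoothLaplacian f := by
  simp only [smoothLaplacian, Derivation.map_smul, Finset.smul_sum]

theorem smoothLaplacian_affineComp (x₀ : EuclideanSpace ℝ (Fin n)) (R : ℝ)
    (f : euclideanSmooth n) :
    smoothLaplacian (affineComp x₀ R f) = R ^ 2 • affineComp x₀ R (smoothLaplacian f) := by
  simp only [smoothLaplacian, dirDeriv_affineComp, Derivation.map_smul, smul_smul, map_sum,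
    Finset.smul_sum, sq]

theorem norm_gradient_laplacian_affineComp_sq (x₀ : EuclideanSpace ℝ (Fin n)) (R c : ℝ)
    (f : euclideanSmooth n) (x : EuclideanSpace ℝ (Fin n)) :
    ‖gradient (laplacian (c • affineComp x₀ R f : euclideanSmooth n)) x‖ ^ 2 =
      c ^ 2 * R ^ 6 * ‖gradient (laplacian f) (x₀ + R • x)‖ ^ 2 := by
  rw [norm_gradient_laplacian_sq, norm_gradient_laplacian_sq, Finset.mul_sum]
  refine Finset.sum_congr rfl fun l _ => ?_
  rw [gradLaplacian, smoothLaplacian_smul, smoothLaplacian_affineComp, Derivation.map_smul,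
    Derivation.map_smul, dirDeriv_affineComp]
  change (c * (R ^ 2 * (R * gradLaplacian l f (x₀ + R • x)))) ^ 2 = _
  ring

theorem IsStableTriharmonicSolution.rescale (hu : IsStableTriharmonicSolution p u)
    (x₀ : EuclideanSpace ℝ (Fin n)) (hR : 0 < R) (hc : 0 < c) (hcR : c ^ (p - 1) = R ^ 6) :
    IsStableTriharmonicSolution p (c • affineComp x₀ R u : euclideanSmooth n) := by
  have hpow (x : EuclideanSpace ℝ (Fin n)) :
      |(c • affineComp x₀ R u : euclideanSmooth n) x| ^ (p - 1) =
        R ^ 6 * |u (x₀ + R • x)| ^ (p - 1) := by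
    change |c * u (x₀ + R • x)| ^ (p - 1) = _
    rw [abs_mul, abs_of_pos hc, Real.mul_rpow hc.le (abs_nonneg _), hcR]
  refine ⟨smoothAlgebra_contDiff _, fun x => ?_, fun φ hφ hsupp => ?_⟩
  · have heq := hu.equation (x₀ + R • x)
    rw [hpow]
    simp only [laplacian_eq_smoothLaplacian, smoothLaplacian_smul, smoothLaplacian_affineComp]
      at heq ⊢
    change c * (R ^ 2 * (R ^ 2 * (R ^ 2 *
      smoothLaplacian (smoothLaplacian (smoothLaplacian u)) (x₀ + R • x)))) =
        -(R ^ 6 * |u (x₀ + R • x)| ^ (p - 1) * (c * u (x₀ + R • x)))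
    rw [heq]
    ring
  · lift φ to euclideanSmooth n using hφ
    obtain ⟨χ, hχ, rfl⟩ : ∃ χ ∈ testFunctions _, φ = affineComp x₀ R χ :=
      ⟨_, affineComp_mem_testFunctions _ (inv_ne_zero hR.ne') hsupp,
        (affineComp_affineComp_inv x₀ hR.ne' φ).symm⟩
    have hnorm (x : EuclideanSpace ℝ (Fin n)) :=
      norm_gradient_laplacian_affineComp_sq x₀ R 1 χ x
    simp only [one_smul, one_pow, one_mul] at hnorm
    simp only [hnorm, hpow, affineComp_apply, mul_assoc, integral_const_mul]
    rw [integral_comp_affine (fun x => |u x| ^ (p - 1) * χ x ^ 2) x₀ hR,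
      integral_comp_affine (fun x => ‖gradient (laplacian χ) x‖ ^ 2) x₀ hR]
    calc p * (R ^ 6 * ((R ^ Module.finrank ℝ (EuclideanSpace ℝ (Fin n)))⁻¹ *
          ∫ x, |u x| ^ (p - 1) * χ x ^ 2))
        = R ^ 6 * ((R ^ Module.finrank ℝ (EuclideanSpace ℝ (Fin n)))⁻¹ *
          (p * ∫ x, |u x| ^ (p - 1) * χ x ^ 2)) := by ring
      _ ≤ _ := by
        gcongr
        exact hu.stable χ (smoothAlgebra_contDiff χ) hχ

theorem ballEnergy_rescale (hp : 1 < p) (u : euclideanSmooth n)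
    (x₀ : EuclideanSpace ℝ (Fin n)) (hR : 0 < R) (hc : 0 < c) (hcR : c ^ (p - 1) = R ^ 6) :
    ballEnergy p (c • affineComp x₀ R u : euclideanSmooth n) 0 1 =
      c ^ 2 * R ^ 6 * (R ^ n)⁻¹ * ballEnergy p u x₀ R := by
  have hpow (x : EuclideanSpace ℝ (Fin n)) :
      |(c • affineComp x₀ R u : euclideanSmooth n) x| ^ (p + 1) =
        c ^ 2 * R ^ 6 * |u (x₀ + R • x)| ^ (p + 1) := by
    change |c * u (x₀ + R • x)| ^ (p + 1) = _
    rw [abs_mul, Real.mul_rpow (abs_nonneg _) (abs_nonneg _), ← abs_rpow_sub_one_mul_sq hp c,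
      abs_of_pos hc, hcR, mul_comm (R ^ 6)]
  simp only [ballEnergy, hpow, norm_gradient_laplacian_affineComp_sq, integral_const_mul]
  rw [setIntegral_ball_comp_affine (fun x => |u x| ^ (p + 1)) x₀ hR,
    setIntegral_ball_comp_affine (fun x => ‖gradient (laplacian u) x‖ ^ 2) x₀ hR,
    finrank_euclideanSpace_fin, one_mul]
  ring

theorem setIntegral_sq_rescale (u : euclideanSmooth n) (x₀ : EuclideanSpace ℝ (Fin n))
    (hR : 0 < R) (c : ℝ) :
    ∫ x in Metric.ball 0 2, (c • affineComp x₀ R u : euclideanSmooth n) x ^ 2 =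
      c ^ 2 * (R ^ n)⁻¹ * ∫ x in Metric.ball x₀ (2 * R), u x ^ 2 := by
  change ∫ x in Metric.ball 0 2, (c * u (x₀ + R • x)) ^ 2 = _
  simp only [mul_pow, integral_const_mul]
  rw [setIntegral_ball_comp_affine (fun x => u x ^ 2) x₀ hR, finrank_euclideanSpace_fin,
    mul_assoc]

end Rescaling

theorem triharmonic_stable_energy_growth_general (n : ℕ) {p : ℝ} (hp : 1 < p) :
    ∃ C : ℝ, 0 < C ∧ ∀ u : EuclideanSpace ℝ (Fin n) → ℝ, IsStableTriharmonicSolution p u →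
      ∀ (x₀ : EuclideanSpace ℝ (Fin n)) (R : ℝ), 0 < R →
        ballEnergy p u x₀ R ≤
          C * R ^ (-6 : ℝ) * ∫ x in Metric.ball x₀ (2 * R), u x ^ 2 ∧
        ballEnergy p u x₀ R ≤ C * R ^ ((n : ℝ) - 6 * (p + 1) / (p - 1)) := by
  obtain ⟨C, hC, hunit⟩ := exists_ballEnergy_zero_one_le n hp
  refine ⟨C, hC, fun u hu x₀ R hR => ?_⟩
  lift u to euclideanSmooth n using hu.contDiff
  have hp0 : p - 1 ≠ 0 := (sub_pos.2 hp).ne'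
  have hscale : 0 < R ^ (6 / (p - 1)) := Real.rpow_pos_of_pos hR _
  have hexp : (R ^ (6 / (p - 1))) ^ (p - 1) = R ^ 6 := by
    rw [← Real.rpow_mul hR.le, div_mul_cancel₀ _ hp0, Real.rpow_ofNat]
  obtain ⟨hmass, hvolume⟩ := hunit _ (hu.rescale x₀ hR hscale hexp)
  rw [ballEnergy_rescale hp u x₀ hR hscale hexp] at hmass hvolume
  rw [setIntegral_sq_rescale u x₀ hR] at hmass
  constructor
  · refine le_of_mul_le_mul_left (hmass.trans_eq ?_)
      (by positivity : 0 < (R ^ (6 / (p - 1))) ^ 2 * R ^ 6 * (R ^ n)⁻¹)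
    rw [Real.rpow_neg hR.le, Real.rpow_ofNat]
    field_simp
  · refine le_of_mul_le_mul_left (hvolume.trans_eq ?_)
      (by positivity : 0 < (R ^ (6 / (p - 1))) ^ 2 * R ^ 6 * (R ^ n)⁻¹)
    have hsplit : (n : ℝ) - 6 * (p + 1) / (p - 1) = n - 6 - 6 / (p - 1) * 2 := by
      field_simp
      ring
    rw [hsplit, Real.rpow_sub hR, Real.rpow_sub hR, Real.rpow_natCast, Real.rpow_ofNat,
      Real.rpow_mul hR.le, Real.rpow_ofNat]
    field_simp

/-- **Lemma 5.2.** For a smooth stable solution `u` of the triharmonic Lane–Emden equation,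
there is `C > 0` so that for every `R > 0`:
`∫_{B_R} |u|^{p+1} + ∫_{B_R} |∇Δu|² ≤ C R⁻⁶ ∫_{B_{2R}} u²` and
`∫_{B_R} |u|^{p+1} + ∫_{B_R} |∇Δu|² ≤ C R^{n - 6(p+1)/(p-1)}`. -/
theorem triharmonic_stable_energy_growth (n : ℕ) (hn : 1 ≤ n) (p : ℝ) (hp : 1 < p)
    (u : EuclideanSpace ℝ (Fin n) → ℝ) (hu : ContDiff ℝ (⊤ : ℕ∞) u)
    (heq : ∀ x, laplacian (laplacian (laplacian u)) x = -(|u x| ^ (p - 1) * u x))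
    (hstab : ∀ φ : EuclideanSpace ℝ (Fin n) → ℝ, ContDiff ℝ (⊤ : ℕ∞) φ →
      HasCompactSupport φ →
      p * (∫ x, |u x| ^ (p - 1) * φ x ^ 2) ≤ ∫ x, ‖gradient (laplacian φ) x‖ ^ 2) :
    ∃ C : ℝ, 0 < C ∧ ∀ R : ℝ, 0 < R →
      ((∫ x in Metric.ball (0 : EuclideanSpace ℝ (Fin n)) R, |u x| ^ (p + 1))
          + (∫ x in Metric.ball (0 : EuclideanSpace ℝ (Fin n)) R,
              ‖gradient (laplacian u) x‖ ^ 2) ≤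
        C * R ^ (-6 : ℝ) *
          ∫ x in Metric.ball (0 : EuclideanSpace ℝ (Fin n)) (2 * R), u x ^ 2) ∧
      ((∫ x in Metric.ball (0 : EuclideanSpace ℝ (Fin n)) R, |u x| ^ (p + 1))
          + (∫ x in Metric.ball (0 : EuclideanSpace ℝ (Fin n)) R,
              ‖gradient (laplacian u) x‖ ^ 2) ≤
        C * R ^ ((n : ℝ) - 6 * (p + 1) / (p - 1))) := by
  obtain ⟨C, hC, henergy⟩ := triharmonic_stable_energy_growth_general n hp
  exact ⟨C, hC, henergy u ⟨hu, heq, hstab⟩ 0⟩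
end
end

section
/- Let A₁, A₂ be real numbers with A₁ + 12 > 0 and A₂ ≥ 0. Then there exist real numbers c₁, c₂, nonnegative real numbers d₁, d₂, and real numbers e_{ij} (0 ≤ i, j ≤ 2) such that for every three-times continuously differentiable function f : ℝ → ℝ, the function G(λ) = ∑_{0≤i,j≤2} e_{ij} λ^{i+j} f^{(i)}(λ) f^{(j)}(λ) is differentiable on (0,∞) and for every λ > 0: 3λ⁵ f'''(λ)² + A₁ λ³ f''(λ)² + A₂ λ f'(λ)² = 3λ (λ² f'''(λ) + c₁ λ f''(λ))² + d₁ λ (λ f''(λ) + c₂ f'(λ))² + d₂ λ f'(λ)² + G'(λ). -/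
/-!
Put `u k = t ^ k * f⁽ᵏ⁾`. Expanding the square of `t ^ k * f⁽ᵏ⁺¹⁾ = (u k)' - k * u k / t` gives the
identity behind Hardy's inequality,
`t * (t ^ k * f⁽ᵏ⁺¹⁾)² = t * ((u k)')² + k² * (u k)² / t - k * ((u k)²)'`,
which moves `k²` times the coefficient of `(f⁽ᵏ⁺¹⁾)²` onto the next lower square. At `k = 2` it
turns the coefficients `(3, A₁, A₂)` of the three squares into `(3, A₁ + 12, A₂)`, and then at
`k = 1` into `(3, A₁ + 12, A₁ + 12 + A₂)`.
-/

theorem differentiableAt_iteratedDeriv {𝕜 F : Type*} [NontriviallyNormedField 𝕜]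
    [NormedAddCommGroup F] [NormedSpace 𝕜 F] {n : WithTop ℕ∞} {m : ℕ} {f : 𝕜 → F} {t : 𝕜}
    (hf : ContDiffAt 𝕜 n f t) (hmn : m < n) : DifferentiableAt 𝕜 (iteratedDeriv m f) t := by
  rw [iteratedDeriv_eq_equiv_comp, LinearIsometryEquiv.comp_differentiableAt_iff]
  exact hf.differentiableAt_iteratedFDeriv hmn

section EulerForm

variable {𝕜 : Type*} [NontriviallyNormedField 𝕜] {n : ℕ} {f g : 𝕜 → 𝕜} {t : 𝕜}

/-- The quadratic form with coefficients `e` in the Euler monomials `t ^ i * f⁽ⁱ⁾(t)`, `i < n`. It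
supplies the functions whose derivatives are split off in the Jordan-form decomposition. -/
noncomputable def eulerForm (e : Fin n → Fin n → 𝕜) (f : 𝕜 → 𝕜) (t : 𝕜) : 𝕜 :=
  ∑ i, ∑ j, e i j * t ^ ((i : ℕ) + (j : ℕ)) * iteratedDeriv i f t * iteratedDeriv j f t

theorem eulerForm_diagonal (a : Fin n → 𝕜) (f : 𝕜 → 𝕜) :
    eulerForm (Matrix.diagonal a) f =
      fun t => ∑ i, a i * (t ^ (i : ℕ) * iteratedDeriv i f t) ^ 2 := by
  funext t
  refine Finset.sum_congr rfl fun i _ => ?_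
  rw [Finset.sum_eq_single i (fun j _ hji => by simp [Matrix.diagonal_apply_ne' _ hji]) (by simp),
    Matrix.diagonal_apply_eq]
  ring

theorem hasDerivAt_eulerForm_diagonal (hf : ContDiffAt 𝕜 n f t) (a : Fin n → 𝕜) :
    HasDerivAt (eulerForm (Matrix.diagonal a) f)
      (∑ i, a i * deriv (fun s => (s ^ (i : ℕ) * iteratedDeriv i f s) ^ 2) t) t := by
  rw [eulerForm_diagonal]
  refine HasDerivAt.fun_sum fun i _ => HasDerivAt.const_mul _ (DifferentiableAt.hasDerivAt ?_)
  have hi : DifferentiableAt 𝕜 (iteratedDeriv i f) t :=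
    differentiableAt_iteratedDeriv hf (by exact_mod_cast i.isLt)
  fun_prop

theorem deriv_sq_pow_mul (k : ℕ) (hg : DifferentiableAt 𝕜 g t) :
    deriv (fun s => (s ^ k * g s) ^ 2) t =
      2 * (t ^ k * g t) * (k * t ^ (k - 1) * g t + t ^ k * deriv g t) := by
  simpa using (((hasDerivAt_pow k t).fun_mul hg.hasDerivAt).fun_pow 2).deriv

theorem mul_sq_pow_mul_deriv (k : ℕ) (hg : DifferentiableAt 𝕜 g t) :
    t * (t ^ (k + 1) * deriv g t) ^ 2 =
      t * (t ^ (k + 1) * deriv g t + (k + 1) * t ^ k * g t) ^ 2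
        + (k + 1) ^ 2 * t * (t ^ k * g t) ^ 2
        - (k + 1) * deriv (fun s => (s ^ (k + 1) * g s) ^ 2) t := by
  rw [deriv_sq_pow_mul _ hg, Nat.add_sub_cancel]
  push_cast
  ring

end EulerForm

theorem triharmonic_jordan_decomposition_general (A₁ A₂ : ℝ) (hA₁ : 0 ≤ A₁ + 12)
    (hA₂ : 0 ≤ A₁ + 12 + A₂) :
    ∃ c₁ c₂ d₁ d₂ : ℝ, 0 ≤ d₁ ∧ 0 ≤ d₂ ∧ ∃ e : Fin 3 → Fin 3 → ℝ,
      ∀ (f : ℝ → ℝ) (t : ℝ), ContDiffAt ℝ 3 f t →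
        DifferentiableAt ℝ (eulerForm e f) t ∧
          3 * t ^ 5 * iteratedDeriv 3 f t ^ 2 + A₁ * t ^ 3 * iteratedDeriv 2 f t ^ 2
              + A₂ * t * deriv f t ^ 2
            = 3 * t * (t ^ 2 * iteratedDeriv 3 f t + c₁ * t * iteratedDeriv 2 f t) ^ 2
              + d₁ * t * (t * iteratedDeriv 2 f t + c₂ * deriv f t) ^ 2
              + d₂ * t * deriv f t ^ 2
              + deriv (eulerForm e f) t := by
  refine ⟨2, 1, A₁ + 12, A₁ + 12 + A₂, hA₁, hA₂, Matrix.diagonal ![0, -(A₁ + 12), -6],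
    fun f t hf => ?_⟩
  have hG := hasDerivAt_eulerForm_diagonal hf ![0, -(A₁ + 12), -6]
  have deriv_form : deriv (eulerForm (Matrix.diagonal ![0, -(A₁ + 12), -6]) f) t =
      -(A₁ + 12) * deriv (fun s => (s * deriv f s) ^ 2) t
        - 6 * deriv (fun s => (s ^ 2 * iteratedDeriv 2 f s) ^ 2) t := by
    simpa [Fin.sum_univ_three, iteratedDeriv_one, sub_eq_add_neg] using hG.deriv
  have square₃ : t * (t ^ 2 * iteratedDeriv 3 f t) ^ 2 =
      t * (t ^ 2 * iteratedDeriv 3 f t + 2 * t * iteratedDeriv 2 f t) ^ 2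
        + 2 ^ 2 * t * (t * iteratedDeriv 2 f t) ^ 2
        - 2 * deriv (fun s => (s ^ 2 * iteratedDeriv 2 f s) ^ 2) t := by
    simpa [iteratedDeriv_succ, one_add_one_eq_two] using
      mul_sq_pow_mul_deriv 1 (differentiableAt_iteratedDeriv hf (m := 2) (by norm_num))
  have square₂ : t * (t * iteratedDeriv 2 f t) ^ 2 =
      t * (t * iteratedDeriv 2 f t + deriv f t) ^ 2 + t * deriv f t ^ 2
        - deriv (fun s => (s * deriv f s) ^ 2) t := by
    simpa [iteratedDeriv_succ] using
      mul_sq_pow_mul_deriv 0 (differentiableAt_iteratedDeriv hf (m := 1) (by norm_num))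
  refine ⟨hG.differentiableAt, ?_⟩
  linear_combination 3 * square₃ + (A₁ + 12) * square₂ - deriv_form

/-- **Lemma 7.2 (Jordan-form decomposition).** If `A₁ + 12 > 0` and `A₂ ≥ 0`, there exist
`c₁, c₂ : ℝ`, nonnegative `d₁, d₂` and coefficients `e i j` such that for every `C³` function
`f : ℝ → ℝ`, with `G(λ) = ∑_{0 ≤ i,j ≤ 2} e i j · λ^{i+j} f⁽ⁱ⁾(λ) f⁽ʲ⁾(λ)`, the function `G` is
differentiable on `(0,∞)` and for every `λ > 0`:
`3λ⁵ f'''(λ)² + A₁ λ³ f''(λ)² + A₂ λ f'(λ)²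
  = 3λ (λ² f'''(λ) + c₁ λ f''(λ))² + d₁ λ (λ f''(λ) + c₂ f'(λ))² + d₂ λ f'(λ)² + G'(λ)`. -/
theorem triharmonic_jordan_decomposition (A₁ A₂ : ℝ) (hA1 : 0 < A₁ + 12) (hA2 : 0 ≤ A₂) :
    ∃ (c₁ c₂ d₁ d₂ : ℝ), 0 ≤ d₁ ∧ 0 ≤ d₂ ∧ ∃ e : Fin 3 → Fin 3 → ℝ,
      ∀ f : ℝ → ℝ, ContDiff ℝ 3 f →
        (∀ lam : ℝ, 0 < lam → DifferentiableAt ℝ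
          (fun t : ℝ => ∑ i : Fin 3, ∑ j : Fin 3,
            e i j * t ^ ((i : ℕ) + (j : ℕ)) * iteratedDeriv (i : ℕ) f t
              * iteratedDeriv (j : ℕ) f t) lam) ∧
        ∀ lam : ℝ, 0 < lam →
          3 * lam ^ 5 * (iteratedDeriv 3 f lam) ^ 2
              + A₁ * lam ^ 3 * (iteratedDeriv 2 f lam) ^ 2
              + A₂ * lam * (deriv f lam) ^ 2
            = 3 * lam * (lam ^ 2 * iteratedDeriv 3 f lam + c₁ * lam * iteratedDeriv 2 f lam) ^ 2
              + d₁ * lam * (lam * iteratedDeriv 2 f lam + c₂ * deriv f lam) ^ 2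
              + d₂ * lam * (deriv f lam) ^ 2
              + deriv (fun t : ℝ => ∑ i : Fin 3, ∑ j : Fin 3,
                  e i j * t ^ ((i : ℕ) + (j : ℕ)) * iteratedDeriv (i : ℕ) f t
                    * iteratedDeriv (j : ℕ) f t) lam := by
  obtain ⟨c₁, c₂, d₁, d₂, hd₁, hd₂, e, h⟩ :=
    triharmonic_jordan_decomposition_general A₁ A₂ hA1.le (by linarith)
  exact ⟨c₁, c₂, d₁, d₂, hd₁, hd₂, e, fun f hf =>
    ⟨fun t _ => (h f t hf.contDiffAt).1, fun t _ => (h f t hf.contDiffAt).2⟩⟩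
end
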